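/- arXiv:2502.06071 — 2 statements merged into one kernel-verified Lean document; each statement's English description precedes it below -/
import Mathlib

section
/- Let Q ≥ 2 be a fixed integer and ρ ∈ (0, 1/2] a fixed real. For a positive integer κ let N = κQ and n = ⌊ρN⌋. For the congestion dynamics {σ(t)} on 𝒮_n, with t_n := ⌈(1/2) n log n⌉, one has lim_{α→∞} limsup_{n→∞} D_TV( t_n + ⌈αn⌉ ) = 0. -/
/-!
The chain is lifted to placements. With `m = N - n` vacancies, give each resource `κ` distinct slots
and consider bijections `η` from the `n + m` positions (players and vacancies) onto the
`κ Q` slots. The dynamics is the image of the chain that picks a player and exchanges it with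
itself or with a uniformly chosen vacancy, and the Gibbs measure is the image of the uniform
measure on bijections (`gen_ind`, `gibbs_eq`). The lifted operator `gen` is symmetric, so the problem
becomes a bound in mean square for `gen ^ t` applied to the indicator of a starting configuration.

Functions of the slots of the players are decomposed into pure functions `u A`, one for each set `A` of
players: `u A` depends on `A` only and vanishes when any single position of `A` is averaged out
(`exists_pure_decomp`); different degrees `|A|` are orthogonal (`pureOn_orth`). On the field `u` of
degree `k` the operator acts as `rate k - L* L` with `‖L‖² ≤ rate k`, where
`rate k = (n - k) (m + 1) + k`; this uses `n ≤ m`, that is `ρ ≤ 1/2`, and shows that the norm of the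
field contracts by the factor `rate k` (`step_norm_le`). The pure functions of one degree are not
mutually orthogonal, but exchanging players with fixed partners among the vacancies shows that the
squared norm of the field is at most `2 ^ k` times that of its sum (`fieldNorm_le`).

For the indicator of a configuration the squared norm of the degree-`k` part, relative to
equilibrium, is at most `(2 e Q) ^ k * (n choose k)`, because prescribing the resources of `k`
players has probability at least `(e Q) ^ (-k)` (`card_le_cylMass`). Hence the squared distance to
equilibrium is at most `∑_{k ≥ 1} (rate k / rate 0) ^ (2 t) (2 e Q) ^ k (n choose k)` (`event_bound`).
Since `rate k / rate 0 ≤ exp (-k θ)` with `θ = m / (n (m + 1))`, this sum is at most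
`exp (2 e Q n e ^ (-2 t θ)) - 1`, and at time `t ≥ (n log n) / 2 + α n` one has
`n e ^ (-2 t θ) ≤ e ^ (1 - α)`, a bound uniform in `n` that vanishes as `α → ∞`.
-/

open scoped BigOperators
open Filter MeasureTheory

noncomputable section

namespace CongestionPaper

attribute [local instance 10] Classical.propDecidable

/-- Evolution of a distribution under a transition kernel `p` on a finite state space:
`evolve p mu t` is the law at time `t` of the Markov chain with transition matrix `p`
and initial distribution `mu`. -/
def evolve {X : Type*} [Fintype X] (p : X -> X -> Real) (mu : X -> Real) : Nat -> X -> Real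
  | 0 => mu
  | (t+1) => fun y => ∑ x, evolve p mu t x * p x y

/-- Point mass at `x0`. -/
def delta {X : Type*} (x0 : X) : X -> Real := fun x => if x = x0 then 1 else 0

/-- Total variation distance between two distributions on a finite type,
as the supremum over events `A` of the difference of probabilities of `A`. -/
def tvDist {X : Type*} [Fintype X] (mu nu : X -> Real) : Real :=
  ⨆ A : Finset X, |∑ x ∈ A, (mu x - nu x)|

/-- Total variation distance between the pushforwards of `mu` and `nu` under `m`. -/
def tvDistOn {X : Type*} [Fintype X] {Y : Type*} (m : X -> Y) (mu nu : X -> Real) : Real :=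
  ⨆ B : Finset Y, |∑ x : X, (if m x ∈ B then mu x - nu x else 0)|

/-- Worst-case (over the initial state) total variation distance to `pi` at time `t`. -/
def DTV {X : Type*} [Fintype X] (p : X -> X -> Real) (pi : X -> Real) (t : Nat) : Real :=
  ⨆ x0 : X, tvDist (evolve p (delta x0) t) pi

/-- Mixing time `T^mix(eps)`. -/
def Tmix {X : Type*} [Fintype X] (p : X -> X -> Real) (pi : X -> Real) (eps : Real) : Nat :=
  sInf {t : Nat | DTV p pi t ≤ eps}

/-- Probability of a given trajectory `w` of length `T` for the chain started at `x0`. -/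
def pathProb {X : Type*} [Fintype X] (p : X -> X -> Real) (x0 : X) (T : Nat)
    (w : Fin (T+1) -> X) : Real :=
  (if w 0 = x0 then 1 else 0) * ∏ t : Fin T, p (w t.castSucc) (w t.succ)

/-- Probability that some state visited up to time `T` satisfies `Bad`. -/
def hitProb {X : Type*} [Fintype X] (p : X -> X -> Real) (x0 : X) (T : Nat)
    (Bad : X -> Prop) : Real :=
  ∑ w : Fin (T+1) -> X, (if ∃ t, Bad (w t) then pathProb p x0 T w else 0)

/-! ### The load profile chain -/

/-- Load profiles: `xi : S -> {0,...,kappa}` with `∑ xi v = n`, where `S = Fin Q`. -/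
abbrev LoadState (Q kap n : Nat) := {xi : Fin Q -> Fin (kap+1) // (∑ v, ((xi v : Nat))) = n}

/-- Transition matrix of the load profile chain on `Xi_{n,S,kappa}`. -/
def loadP (Q kap n : Nat) (xi xi' : LoadState Q kap n) : Real :=
  if xi' = xi then
    (∑ v, ((xi.1 v : Nat) : Real) * (((1 + kap - (xi.1 v : Nat) : Nat)) : Real))
      / ((n : Real) * ((1 + kap * Q - n : Nat) : Real))
  else
    (∑ vm, ∑ vp,
      if vm ≠ vp ∧ (xi'.1 vm : Nat) + 1 = (xi.1 vm : Nat) ∧ (xi'.1 vp : Nat) = (xi.1 vp : Nat) + 1 ∧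
          (∀ v, v ≠ vm -> v ≠ vp -> xi'.1 v = xi.1 v)
        then ((xi.1 vm : Nat) : Real) * (((kap - (xi.1 vp : Nat) : Nat)) : Real) else 0)
      / ((n : Real) * ((1 + kap * Q - n : Nat) : Real))

/-- Stationary weight `∏_v 1/(xi_v! (kappa - xi_v)!)`. -/
def loadWeight (Q kap n : Nat) (xi : LoadState Q kap n) : Real :=
  ∏ v, (1 : Real) /
    ((Nat.factorial (xi.1 v : Nat) : Real) * (Nat.factorial (kap - (xi.1 v : Nat)) : Real))

/-- The stationary distribution `pi_n` of the load profile chain. -/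
def loadPi (Q kap n : Nat) (xi : LoadState Q kap n) : Real :=
  loadWeight Q kap n xi / (∑ eta : LoadState Q kap n, loadWeight Q kap n eta)

/-- `xi ∈ Xi(delta)`: the normalized load profile is within Euclidean distance `delta`
of the constant vector `(rho/Q)_v`. -/
def loadNear (Q kap n : Nat) (rho : Real) (xi : LoadState Q kap n) (del : Real) : Prop :=
  Real.sqrt (∑ v, (((xi.1 v : Nat) : Real) / ((kap * Q : Nat) : Real) - rho / (Q : Real))^2) ≤ del

/-- `D(xi, xi') = (1/2) ∑_v |xi_v - xi'_v|`. -/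
def loadD (Q kap n : Nat) (xi xi' : LoadState Q kap n) : Real :=
  (1/2) * ∑ v, |((xi.1 v : Nat) : Real) - ((xi'.1 v : Nat) : Real)|

/-! ### The congestion dynamics (Glauber dynamics) -/

/-- `xi_v(sigma)`: the number of players adopting resource `v`. -/
def xiCount {Q n : Nat} (sg : Fin n -> Fin Q) (v : Fin Q) : Nat :=
  (Finset.univ.filter fun i => sg i = v).card

/-- Configurations: `sigma : [n] -> S` with `xi_v(sigma) ≤ kappa` for every `v`. -/
abbrev ConfigState (Q kap n : Nat) := {sg : Fin n -> Fin Q // ∀ v, xiCount sg v ≤ kap}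

/-- Transition matrix of the congestion dynamics. -/
def configP (Q kap n : Nat) (sg sg' : ConfigState Q kap n) : Real :=
  if sg' = sg then
    (∑ i, ((1 + kap - xiCount sg.1 (sg.1 i) : Nat) : Real))
      / ((n : Real) * ((1 + kap * Q - n : Nat) : Real))
  else
    (∑ i, if sg'.1 i ≠ sg.1 i ∧ (∀ j, j ≠ i -> sg'.1 j = sg.1 j)
        then ((kap - xiCount sg.1 (sg'.1 i) : Nat) : Real) else 0)
      / ((n : Real) * ((1 + kap * Q - n : Nat) : Real))

/-- The potential `F(sigma) = ∑_v ∑_{s=0}^{xi_v(sigma)} (log(kappa+1) - log(kappa+1-s))`. -/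
def potF (Q kap n : Nat) (sg : ConfigState Q kap n) : Real :=
  ∑ v, ∑ s ∈ Finset.range (xiCount sg.1 v + 1),
    (Real.log ((kap : Real) + 1) - Real.log ((kap : Real) + 1 - (s : Real)))

/-- The Gibbs measure `mu_n(sigma) = e^{-F(sigma)}/Z_n`. -/
def gibbs (Q kap n : Nat) (sg : ConfigState Q kap n) : Real :=
  Real.exp (-(potF Q kap n sg)) / (∑ ta : ConfigState Q kap n, Real.exp (-(potF Q kap n ta)))

/-- `sigma ∈ S(delta)`. -/
def configNear (Q kap n : Nat) (rho : Real) (sg : ConfigState Q kap n) (del : Real) : Prop :=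
  Real.sqrt (∑ v, ((xiCount sg.1 v : Real) / ((kap * Q : Nat) : Real) - rho / (Q : Real))^2) ≤ del

/-- The load matrix `xi^{sigma0}_{u,v}(sigma)`. -/
def ximat {Q n : Nat} (sg0 sg : Fin n -> Fin Q) (u v : Fin Q) : Nat :=
  (Finset.univ.filter fun i => sg0 i = u ∧ sg i = v).card

/-- `sigma ∈ S(sigma0, delta)`: for each `u`, the normalized `u`-th row of the
load matrix is within Euclidean distance `delta` of the constant vector `(1/Q)_v`. -/
def configNearMat (Q kap n : Nat) (sg0 sg : ConfigState Q kap n) (del : Real) : Prop :=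
  ∀ u, Real.sqrt
      (∑ v, ((ximat sg0.1 sg.1 u v : Real) / (xiCount sg0.1 u : Real) - 1 / (Q : Real))^2) ≤ del

/-- `D^{sigma0}(sigma, sigma') = ∑_u (1/2) ∑_v |xi^{sigma0}_{u,v}(sigma) - xi^{sigma0}_{u,v}(sigma')|`. -/
def matD (Q kap n : Nat) (sg0 sg sg' : ConfigState Q kap n) : Real :=
  ∑ u, (1/2) * ∑ v, |(ximat sg0.1 sg.1 u v : Real) - (ximat sg0.1 sg'.1 u v : Real)|

/-- The constant `cStar = (sqrt Q/(1-rho) + rho/(2Q))^{1/2}`. -/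
def cStar (Q : Nat) (rho : Real) : Real :=
  Real.sqrt (Real.sqrt (Q : Real) / (1 - rho) + rho / (2 * (Q : Real)))

/-! ### The base-exchange chain on `B^(Q)(n)` -/

/-- `B^(Q)(n) = {x ∈ Z_{≥0}^Q : ∑ x_i = n}`. -/
abbrev BState (Q n : Nat) := {x : Fin Q -> Fin (n+1) // (∑ i, ((x i : Nat))) = n}

/-- Transition matrix of the base-exchange chain on `B^(Q)(n)`. -/
def baseP (Q n : Nat) (x y : BState Q n) : Real :=
  if y = x then
    ∑ i, (if 0 < (x.1 i : Nat) then (1 : Real) / ((Q : Real) * (Q : Real)) else (1 : Real) / (Q : Real))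
  else
    ∑ i, ∑ j,
      if i ≠ j ∧ (y.1 i : Nat) + 1 = (x.1 i : Nat) ∧ (y.1 j : Nat) = (x.1 j : Nat) + 1 ∧
          (∀ v, v ≠ i -> v ≠ j -> y.1 v = x.1 v)
        then (1 : Real) / ((Q : Real) * (Q : Real)) else 0

/-- The lazy version of the base-exchange chain. -/
def lazyBaseP (Q n : Nat) (x y : BState Q n) : Real :=
  (1/2) * (if y = x then 1 else 0) + (1/2) * baseP Q n x y

/-- The uniform distribution on `B^(Q)(n)`. -/
def unifB (Q n : Nat) (x : BState Q n) : Real := 1 / (Fintype.card (BState Q n) : Real)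

set_option linter.unusedSectionVars false

/-! ### Functions of a placement and their pure parts -/

section General

variable {Pos S : Type*} [Fintype Pos] [DecidableEq Pos] [Fintype S] [DecidableEq S]

/-- Left action of the permutations of the positions on real functions of a placement
`η : Pos ≃ S`: precompose the placement with the permutation. -/
def act (g : Equiv.Perm Pos) : ((Pos ≃ S) → ℝ) →ₗ[ℝ] ((Pos ≃ S) → ℝ) where
  toFun f := fun η => f (g.trans η)
  map_add' _ _ := rfl
  map_smul' _ _ := rfl

@[simp] lemma act_apply (g : Equiv.Perm Pos) (f : (Pos ≃ S) → ℝ) (η : Pos ≃ S) :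
    act g f η = f (g.trans η) := rfl

lemma act_act (g k : Equiv.Perm Pos) (f : (Pos ≃ S) → ℝ) : act g (act k f) = act (g * k) f := rfl

lemma act_one (f : (Pos ≃ S) → ℝ) : act 1 f = f := rfl

lemma act_dot_act (g : Equiv.Perm Pos) (f k : (Pos ≃ S) → ℝ) :
    act g f ⬝ᵥ act g k = f ⬝ᵥ k := by
  simp only [dotProduct, act_apply]
  exact Fintype.sum_equiv (Equiv.mk (fun η : Pos ≃ S => g.trans η) (fun η => g.symm.trans η)
    (fun η => by ext; simp) (fun η => by ext; simp)) _ _ (fun η => rfl)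

lemma act_dot (g : Equiv.Perm Pos) (f k : (Pos ≃ S) → ℝ) :
    act g f ⬝ᵥ k = f ⬝ᵥ act g⁻¹ k := by
  rw [← act_dot_act g f, act_act, mul_inv_cancel, act_one]

lemma act_swap_dot (p q : Pos) (f k : (Pos ≃ S) → ℝ) :
    act (Equiv.swap p q) f ⬝ᵥ k = f ⬝ᵥ act (Equiv.swap p q) k := by
  rw [act_dot, Equiv.swap_inv]

/-- Functions of the placement that depend only on the slots of the positions in `A`, expressed as
invariance under all permutations of positions that fix `A` pointwise. -/
def depOn (A : Finset Pos) : Submodule ℝ ((Pos ≃ S) → ℝ) where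
  carrier := {f | ∀ g : Equiv.Perm Pos, (∀ p ∈ A, g p = p) → act g f = f}
  add_mem' := by
    intro a b ha hb g hg
    rw [map_add, ha g hg, hb g hg]
  zero_mem' := by intro g _; simp
  smul_mem' := by
    intro c a ha g hg
    rw [map_smul, ha g hg]

lemma depOn_inv {A : Finset Pos} {f : (Pos ≃ S) → ℝ} (hf : f ∈ depOn A) {g : Equiv.Perm Pos}
    (hg : ∀ p ∈ A, g p = p) : act g f = f := hf g hg

lemma depOn_swap {A : Finset Pos} {f : (Pos ≃ S) → ℝ} (hf : f ∈ depOn A) {p q : Pos}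
    (hp : p ∉ A) (hq : q ∉ A) : act (Equiv.swap p q) f = f := by
  refine depOn_inv hf (fun a ha => Equiv.swap_apply_of_ne_of_ne ?_ ?_)
  · rintro rfl; exact hp ha
  · rintro rfl; exact hq ha

lemma depOn_congr {A : Finset Pos} {f : (Pos ≃ S) → ℝ} (hf : f ∈ depOn A) {g k : Equiv.Perm Pos}
    (hgk : ∀ p ∈ A, g p = k p) : act g f = act k f := by
  have : act (k⁻¹ * g) f = f := depOn_inv hf (fun p hp => by simp [hgk p hp])
  calc act g f = act (k * (k⁻¹ * g)) f := by rw [mul_inv_cancel_left]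
    _ = act k f := by rw [← act_act, this]

lemma depOn_mono {A B : Finset Pos} (h : A ⊆ B) : (depOn A : Submodule ℝ ((Pos ≃ S) → ℝ)) ≤ depOn B :=
  fun _ hf g hg => hf g (fun p hp => hg p (h hp))

lemma act_mem_depOn {A B : Finset Pos} {f : (Pos ≃ S) → ℝ} (hf : f ∈ depOn A) (g : Equiv.Perm Pos)
    (hB : ∀ p ∈ A, g p ∈ B) : act g f ∈ depOn B := by
  intro k hk
  rw [act_act]
  exact depOn_congr hf (fun p hp => by simp [hk _ (hB p hp)])

/-- Averaging position `p ∈ A` over all positions outside `A \ {p}` removes the dependence on `p`. -/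
lemma sum_swap_mem_depOn {A : Finset Pos} {f : (Pos ≃ S) → ℝ} (hf : f ∈ depOn A) (p : Pos) :
    ∑ q ∈ (A.erase p)ᶜ, act (Equiv.swap p q) f ∈ depOn (A.erase p) := by
  intro g hg
  rw [map_sum]
  have hmem : ∀ q, q ∈ (A.erase p)ᶜ ↔ g q ∈ (A.erase p)ᶜ := by
    intro q
    simp only [Finset.mem_compl, not_iff_not]
    constructor
    · intro hq; rw [hg q hq]; exact hq
    · intro hq
      have := hg _ hq
      rwa [g.injective this] at hq
  refine Finset.sum_equiv g hmem (fun q hq => ?_)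
  rw [act_act]
  refine depOn_congr hf (fun a ha => ?_)
  by_cases hap : a = p
  · subst hap; simp
  · have ha' : a ∈ A.erase p := Finset.mem_erase.2 ⟨hap, ha⟩
    have hq' : q ∉ A.erase p := by simpa only [Finset.mem_compl] using hq
    have h1 : a ≠ q := by rintro rfl; exact hq' ha'
    have h2 : a ≠ g q := by
      intro h
      have := (hmem q).1 hq
      rw [← h] at this
      exact (Finset.mem_compl.1 this) ha'
    rw [Equiv.Perm.mul_apply, Equiv.swap_apply_of_ne_of_ne hap h1,
      Equiv.swap_apply_of_ne_of_ne hap h2, hg a ha']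

/-- Pure functions of the positions in `A`: they depend on `A` only, and averaging out any single
position of `A` gives zero. -/
def pureOn (A : Finset Pos) : Submodule ℝ ((Pos ≃ S) → ℝ) where
  carrier := {f | f ∈ depOn A ∧ ∀ p ∈ A, ∑ q ∈ (A.erase p)ᶜ, act (Equiv.swap p q) f = 0}
  add_mem' := by
    rintro a b ⟨ha, ha'⟩ ⟨hb, hb'⟩
    refine ⟨add_mem ha hb, fun p hp => ?_⟩
    simp only [map_add, Finset.sum_add_distrib, ha' p hp, hb' p hp, add_zero]
  zero_mem' := ⟨zero_mem _, fun p _ => by simp⟩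
  smul_mem' := by
    rintro c a ⟨ha, ha'⟩
    refine ⟨Submodule.smul_mem _ _ ha, fun p hp => ?_⟩
    simp only [map_smul, ← Finset.smul_sum, ha' p hp, smul_zero]

lemma act_mem_pureOn {A B : Finset Pos} {f : (Pos ≃ S) → ℝ} (hf : f ∈ pureOn A)
    (g : Equiv.Perm Pos) (hB : ∀ p, p ∈ A ↔ g p ∈ B) : act g f ∈ pureOn B := by
  refine ⟨act_mem_depOn hf.1 g (fun p hp => (hB p).1 hp), fun p hp => ?_⟩
  have hp' : g⁻¹ p ∈ A := by rw [hB]; simpa using hp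
  have h0 := congrArg (act g) (hf.2 _ hp')
  rw [map_zero, map_sum] at h0
  rw [← h0]
  symm
  refine Finset.sum_equiv g (fun q => ?_) (fun q _ => ?_)
  · simp only [Finset.mem_compl, Finset.mem_erase, hB q, ne_eq,
      Equiv.Perm.eq_inv_iff_eq]
  · have hgp : g (g⁻¹ p) = p := by simp
    rw [act_act, act_act, Equiv.mul_swap_eq_swap_mul, hgp]

lemma swap_mem_pureOn {A : Finset Pos} {f : (Pos ≃ S) → ℝ} {i l : Pos} (hi : i ∈ A)
    (hl : l ∉ A.erase i) (hf : f ∈ pureOn (insert l (A.erase i))) :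
    act (Equiv.swap i l) f ∈ pureOn A := by
  refine act_mem_pureOn hf _ (fun p => ?_)
  by_cases hpi : p = i
  · subst hpi
    simp only [Equiv.swap_apply_left, Finset.mem_insert, Finset.mem_erase] at *
    constructor
    · rintro (h | h)
      · rw [← h]; exact hi
      · exact absurd rfl h.1
    · intro h; left; by_contra hne; exact hl ⟨fun h' => hne h'.symm, h⟩
  · by_cases hpl : p = l
    · subst hpl; simp [hi]
    · rw [Equiv.swap_apply_of_ne_of_ne hpi hpl]
      simp [hpi, hpl]

lemma swap_mem_pureOn_self {A : Finset Pos} {f : (Pos ≃ S) → ℝ} {i l : Pos} (hi : i ∈ A)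
    (hl : l ∈ A) (hf : f ∈ pureOn A) :
    act (Equiv.swap i l) f ∈ pureOn A := by
  refine act_mem_pureOn hf _ (fun p => ?_)
  rw [Equiv.swap_apply_def]
  split_ifs with h1 h2
  · subst h1; simp [hi, hl]
  · subst h2; simp [hi, hl]
  · rfl

/-- Orthogonal projection for the dot product. -/
lemma exists_proj {X : Type*} [Fintype X] (K : Submodule ℝ (X → ℝ)) (f : X → ℝ) :
    ∃ y ∈ K, ∀ g ∈ K, (f - y) ⬝ᵥ g = 0 := by
  let e := WithLp.linearEquiv 2 ℝ (X → ℝ)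
  obtain ⟨y, hy, z, hz, hyz⟩ :=
    (K.map (e.symm : (X → ℝ) →ₗ[ℝ] WithLp 2 (X → ℝ)) :
      Submodule ℝ (EuclideanSpace ℝ X)).exists_add_mem_mem_orthogonal (e.symm f)
  obtain ⟨y', hy', rfl⟩ := Submodule.mem_map.1 hy
  refine ⟨y', hy', fun g hg => ?_⟩
  have h1 : z = e.symm (f - y') := by
    rw [map_sub]; rw [hyz]; simp
  have h2 := (Submodule.mem_orthogonal _ _).1 hz (e.symm g) (Submodule.mem_map_of_mem hg)
  rw [h1] at h2
  rw [EuclideanSpace.inner_eq_star_dotProduct] at h2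
  simpa [e] using h2

/-- Functions of `A` orthogonal to all functions of fewer positions of `A` are pure: the average of
such a function over a position is orthogonal to itself. -/
lemma pureOn_of_orth {A : Finset Pos} {f : (Pos ≃ S) → ℝ} (hf : f ∈ depOn A)
    (h : ∀ p ∈ A, ∀ g ∈ (depOn (A.erase p) : Submodule ℝ ((Pos ≃ S) → ℝ)), f ⬝ᵥ g = 0) :
    f ∈ pureOn A := by
  refine ⟨hf, fun p hp => ?_⟩
  have hg := sum_swap_mem_depOn hf p
  set g := ∑ q ∈ (A.erase p)ᶜ, act (Equiv.swap p q) f with hgdef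
  rw [← dotProduct_self_eq_zero]
  nth_rewrite 1 [hgdef]
  rw [sum_dotProduct]
  refine Finset.sum_eq_zero (fun q hq => ?_)
  rw [act_swap_dot, depOn_swap hg (Finset.notMem_erase p A) (Finset.mem_compl.1 hq)]
  exact h p hp g hg

lemma depOn_le_iSup_pureOn (A : Finset Pos) :
    (depOn A : Submodule ℝ ((Pos ≃ S) → ℝ)) ≤ ⨆ B ∈ A.powerset, pureOn B := by
  induction A using Finset.strongInduction with
  | H A ih =>
    intro f hf
    obtain ⟨y, hy, hyo⟩ := exists_proj
      (⨆ p ∈ A, (depOn (A.erase p) : Submodule ℝ ((Pos ≃ S) → ℝ))) f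
    have hle : (⨆ p ∈ A, (depOn (A.erase p) : Submodule ℝ ((Pos ≃ S) → ℝ))) ≤ depOn A :=
      iSup₂_le (fun p _ => depOn_mono (Finset.erase_subset p A))
    have hz : f - y ∈ pureOn A := by
      refine pureOn_of_orth (sub_mem hf (hle hy)) (fun p hp g hg => hyo g ?_)
      exact (le_iSup₂ (f := fun p (_ : p ∈ A) =>
        (depOn (A.erase p) : Submodule ℝ ((Pos ≃ S) → ℝ))) p hp) hg
    have h1 : f - y ∈ ⨆ B ∈ A.powerset, (pureOn B : Submodule ℝ ((Pos ≃ S) → ℝ)) :=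
      (le_iSup₂ (f := fun B (_ : B ∈ A.powerset) =>
        (pureOn B : Submodule ℝ ((Pos ≃ S) → ℝ))) A (Finset.mem_powerset_self A)) hz
    have h2 : (⨆ p ∈ A, (depOn (A.erase p) : Submodule ℝ ((Pos ≃ S) → ℝ)))
        ≤ ⨆ B ∈ A.powerset, (pureOn B : Submodule ℝ ((Pos ≃ S) → ℝ)) := by
      refine iSup₂_le (fun p hp => (ih _ (Finset.erase_ssubset hp)).trans ?_)
      refine iSup₂_le (fun B hB => ?_)
      refine le_iSup₂ (f := fun B (_ : B ∈ A.powerset) =>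
        (pureOn B : Submodule ℝ ((Pos ≃ S) → ℝ))) B ?_
      rw [Finset.mem_powerset] at *
      exact hB.trans (Finset.erase_subset p A)
    have := add_mem h1 (h2 hy)
    simpa using this

/-- Every function of `A` is a sum of pure functions, one for each subset of `A`. -/
lemma exists_pure_decomp (A : Finset Pos) {f : (Pos ≃ S) → ℝ} (hf : f ∈ depOn A) :
    ∃ u : Finset Pos → (Pos ≃ S) → ℝ, (∀ B, u B ∈ pureOn B) ∧ f = ∑ B ∈ A.powerset, u B := by
  have := depOn_le_iSup_pureOn A hf
  rw [Submodule.mem_iSup_finset_iff_exists_sum] at this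
  obtain ⟨u, hu⟩ := this
  exact ⟨fun B => u B, fun B => (u B).2, hu.symm⟩

/-- A pure function of `B` is orthogonal to every function of fewer positions. -/
lemma pureOn_orth {A : Finset Pos} {g : (Pos ≃ S) → ℝ} (hg : g ∈ depOn A) :
    ∀ (r : ℕ) (B : Finset Pos) (u : (Pos ≃ S) → ℝ), (B \ A).card = r → A.card < B.card →
      u ∈ pureOn B → u ⬝ᵥ g = 0 := by
  intro r
  induction r with
  | zero =>
    intro B u hr hc _
    have : B ⊆ A := Finset.sdiff_eq_empty_iff_subset.1 (Finset.card_eq_zero.1 hr)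
    exact absurd (Finset.card_le_card this) (not_le.2 hc)
  | succ r ih =>
    intro B u hr hc hu
    obtain ⟨p, hp⟩ : (B \ A).Nonempty := by
      rw [← Finset.card_pos]; omega
    obtain ⟨hpB, hpA⟩ := Finset.mem_sdiff.1 hp
    have h0 : (∑ q ∈ (B.erase p)ᶜ, act (Equiv.swap p q) u) ⬝ᵥ g = 0 := by
      rw [hu.2 p hpB, zero_dotProduct]
    rw [sum_dotProduct, ← Finset.sum_filter_add_sum_filter_not _ (fun q => q ∈ A)] at h0
    have hA : ∑ q ∈ (B.erase p)ᶜ with q ∈ A, act (Equiv.swap p q) u ⬝ᵥ g = 0 := by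
      refine Finset.sum_eq_zero (fun q hq => ?_)
      simp only [Finset.mem_filter, Finset.mem_compl] at hq
      obtain ⟨hq1, hq2⟩ := hq
      have hqp : q ≠ p := by rintro rfl; exact hpA hq2
      have hqB : q ∉ B := fun h => hq1 (Finset.mem_erase.2 ⟨hqp, h⟩)
      have hcard : (insert q (B.erase p)).card = B.card := by
        rw [Finset.card_insert_of_notMem hq1, Finset.card_erase_add_one hpB]
      refine ih (insert q (B.erase p)) _ ?_ (by rw [hcard]; exact hc) ?_
      · have : insert q (B.erase p) \ A = (B \ A).erase p := by
          ext a
          simp only [Finset.mem_sdiff, Finset.mem_insert, Finset.mem_erase]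
          constructor
          · rintro ⟨rfl | h, h'⟩
            · exact absurd hq2 h'
            · exact ⟨h.1, h.2, h'⟩
          · rintro ⟨h1, h2, h3⟩
            exact ⟨Or.inr ⟨h1, h2⟩, h3⟩
        rw [this, Finset.card_erase_of_mem hp, hr]; rfl
      · rw [Equiv.swap_comm]
        refine swap_mem_pureOn (Finset.mem_insert_self _ _) ?_ ?_
        · rw [Finset.erase_insert hq1]; exact Finset.notMem_erase p B
        · rw [Finset.erase_insert hq1, Finset.insert_erase hpB]; exact hu
    have hN : ∑ q ∈ (B.erase p)ᶜ with q ∉ A, act (Equiv.swap p q) u ⬝ᵥ g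
        = (((B.erase p)ᶜ.filter (fun q => q ∉ A)).card : ℝ) * (u ⬝ᵥ g) := by
      rw [← nsmul_eq_mul, ← Finset.sum_const]
      refine Finset.sum_congr rfl (fun q hq => ?_)
      simp only [Finset.mem_filter] at hq
      rw [act_swap_dot, depOn_swap hg hpA hq.2]
    rw [hA, hN, zero_add] at h0
    rcases mul_eq_zero.1 h0 with h | h
    · exfalso
      have : p ∈ (B.erase p)ᶜ.filter (fun q => q ∉ A) := by simp [hpA]
      rw [Nat.cast_eq_zero, Finset.card_eq_zero] at h
      rw [h] at this
      simp at this
    · exact h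

end General

/-! ### The generator on fields of pure functions -/

section Generator

variable {Pos S : Type*} [Fintype Pos] [DecidableEq Pos] [Fintype S] [DecidableEq S]

/-- The (unnormalised) generator on functions of the placement, for the set of balls `Bl`: sum over
the ball `i` to be moved and its new position, which is either its own or one of the vacant
positions `Blᶜ`. -/
def gen (Bl : Finset Pos) : ((Pos ≃ S) → ℝ) →ₗ[ℝ] ((Pos ≃ S) → ℝ) :=
  ∑ i ∈ Bl, (LinearMap.id + ∑ d ∈ Blᶜ, act (Equiv.swap i d))

lemma gen_eq (Bl : Finset Pos) (f : (Pos ≃ S) → ℝ) :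
    gen Bl f = ∑ i ∈ Bl, (f + ∑ d ∈ Blᶜ, act (Equiv.swap i d) f) := by
  simp [gen, LinearMap.sum_apply]

lemma gen_dot (Bl : Finset Pos) (f g : (Pos ≃ S) → ℝ) : gen Bl f ⬝ᵥ g = f ⬝ᵥ gen Bl g := by
  simp only [gen_eq, sum_dotProduct, dotProduct_sum, add_dotProduct, dotProduct_add, act_swap_dot]

lemma gen_pow_dot (Bl : Finset Pos) (t : ℕ) (f g : (Pos ≃ S) → ℝ) :
    (gen Bl ^ t) f ⬝ᵥ g = f ⬝ᵥ (gen Bl ^ t) g := by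
  induction t generalizing f with
  | zero => simp
  | succ t ih =>
    rw [pow_succ, Module.End.mul_apply, ih, gen_dot, ← Module.End.mul_apply, ← pow_succ']
    rfl

/-- Spectral bound of the unnormalised generator on pure functions of `k` balls. -/
def rate (Bl : Finset Pos) (k : ℕ) : ℝ :=
  ((Bl.card : ℝ) - k) * ((Blᶜ.card : ℝ) + 1) + k

/-- On a pure function of `A` the exchanges of `i ∈ A` with vacancies are traded, by averaging out `i`,
for exchanges with players outside `A \ {i}`. -/
lemma gen_pure {Bl A : Finset Pos} (hA : A ⊆ Bl) {u : (Pos ≃ S) → ℝ} (hu : u ∈ pureOn A) :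
    gen Bl u = rate Bl A.card • u
      - ∑ i ∈ A, ∑ l ∈ Bl \ A.erase i, act (Equiv.swap i l) u := by
  rw [gen_eq, ← Finset.sum_sdiff hA]
  have h1 : ∑ i ∈ Bl \ A, (u + ∑ d ∈ Blᶜ, act (Equiv.swap i d) u)
      = (((Bl.card : ℝ) - A.card) * ((Blᶜ.card : ℝ) + 1)) • u := by
    have : ∀ i ∈ Bl \ A, (u + ∑ d ∈ Blᶜ, act (Equiv.swap i d) u) = ((Blᶜ.card : ℝ) + 1) • u := by
      intro i hi
      rw [Finset.sum_congr rfl (g := fun _ => u)]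
      · rw [Finset.sum_const, add_smul, one_smul, Nat.cast_smul_eq_nsmul, add_comm]
      · intro d hd
        exact depOn_swap hu.1 (Finset.mem_sdiff.1 hi).2
          (fun h => (Finset.mem_compl.1 hd) (hA h))
    rw [Finset.sum_congr rfl this, Finset.sum_const, Finset.card_sdiff_of_subset hA,
      ← Nat.cast_smul_eq_nsmul ℝ, smul_smul, Nat.cast_sub (Finset.card_le_card hA)]
  have h2 : ∀ i ∈ A, (u + ∑ d ∈ Blᶜ, act (Equiv.swap i d) u)
      = u - ∑ l ∈ Bl \ A.erase i, act (Equiv.swap i l) u := by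
    intro i hi
    have h0 := hu.2 i hi
    have hd : Disjoint Blᶜ (Bl \ A.erase i) :=
      Finset.disjoint_left.2 (fun a ha hb => (Finset.mem_compl.1 ha) (Finset.mem_sdiff.1 hb).1)
    have hun : (A.erase i)ᶜ = Blᶜ ∪ (Bl \ A.erase i) := by
      ext a
      have : a ∈ A → a ∈ Bl := fun h => hA h
      simp only [Finset.mem_compl, Finset.mem_union, Finset.mem_sdiff, Finset.mem_erase]
      tauto
    rw [hun, Finset.sum_union hd] at h0
    rw [eq_neg_of_add_eq_zero_left h0, sub_eq_add_neg]
  rw [h1, Finset.sum_congr rfl h2, Finset.sum_sub_distrib, Finset.sum_const,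
    ← Nat.cast_smul_eq_nsmul ℝ, rate, add_smul, add_sub_assoc]

lemma sum_powersetCard_succ {M : Type*} [AddCommMonoid M] (Bl : Finset Pos) (k : ℕ)
    (F : Finset Pos → Pos → M) :
    ∑ A ∈ Bl.powersetCard (k + 1), ∑ i ∈ A, F (A.erase i) i
      = ∑ A ∈ Bl.powersetCard k, ∑ i ∈ Bl \ A, F A i := by
  rw [Finset.sum_sigma', Finset.sum_sigma']
  refine Finset.sum_bij' (fun x _ => ⟨x.1.erase x.2, x.2⟩) (fun x _ => ⟨insert x.2 x.1, x.2⟩)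
    ?_ ?_ ?_ ?_ ?_
  · rintro ⟨A, i⟩ h
    simp only [Finset.mem_sigma, Finset.mem_powersetCard, Finset.mem_sdiff] at *
    obtain ⟨⟨h1, h2⟩, h3⟩ := h
    refine ⟨⟨(Finset.erase_subset _ _).trans h1, ?_⟩, h1 h3, Finset.notMem_erase _ _⟩
    rw [Finset.card_erase_of_mem h3, h2]; rfl
  · rintro ⟨A, i⟩ h
    simp only [Finset.mem_sigma, Finset.mem_powersetCard, Finset.mem_sdiff] at *
    obtain ⟨⟨h1, h2⟩, h3, h4⟩ := h
    refine ⟨⟨Finset.insert_subset h3 h1, ?_⟩, Finset.mem_insert_self _ _⟩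
    rw [Finset.card_insert_of_notMem h4, h2]
  · rintro ⟨A, i⟩ h
    simp only [Finset.mem_sigma] at h
    simp [Finset.insert_erase h.2]
  · rintro ⟨A, i⟩ h
    simp only [Finset.mem_sigma, Finset.mem_sdiff] at h
    simp [Finset.erase_insert h.2.2]
  · rintro ⟨A, i⟩ h
    rfl

/-- The generator written on fields `u` of pure functions, one for each set of balls: it moves one
element of the indexing set. -/
def step (Bl : Finset Pos) (u : Finset Pos → (Pos ≃ S) → ℝ) : Finset Pos → (Pos ≃ S) → ℝ :=
  fun A => rate Bl A.card • u A
    - ∑ i ∈ A, ∑ l ∈ Bl \ A.erase i, act (Equiv.swap i l) (u (insert l (A.erase i)))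

lemma step_pure (Bl : Finset Pos) {u : Finset Pos → (Pos ≃ S) → ℝ} (hu : ∀ B, u B ∈ pureOn B)
    (A : Finset Pos) : step Bl u A ∈ pureOn A := by
  refine sub_mem (Submodule.smul_mem _ _ (hu A)) (Submodule.sum_mem _ (fun i hi =>
    Submodule.sum_mem _ (fun l hl => ?_)))
  exact swap_mem_pureOn hi (Finset.mem_sdiff.1 hl).2 (hu _)

lemma gen_field (Bl : Finset Pos) (k : ℕ) {u : Finset Pos → (Pos ≃ S) → ℝ}
    (hu : ∀ B, u B ∈ pureOn B) :
    gen Bl (∑ A ∈ Bl.powersetCard k, u A) = ∑ A ∈ Bl.powersetCard k, step Bl u A := by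
  rw [map_sum]
  simp only [step, Finset.sum_sub_distrib]
  rw [Finset.sum_congr rfl (fun A hA => gen_pure (Finset.mem_powersetCard.1 hA).1 (hu A)),
    Finset.sum_sub_distrib]
  congr 1
  cases k with
  | zero => simp
  | succ k =>
    have e1 : ∑ A ∈ Bl.powersetCard (k + 1), ∑ i ∈ A, ∑ l ∈ Bl \ A.erase i,
        act (Equiv.swap i l) (u A)
        = ∑ A ∈ Bl.powersetCard (k + 1), ∑ i ∈ A, ∑ l ∈ Bl \ A.erase i,
        act (Equiv.swap i l) (u (insert i (A.erase i))) := by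
      refine Finset.sum_congr rfl (fun A _ => Finset.sum_congr rfl (fun i hi => ?_))
      rw [Finset.insert_erase hi]
    rw [e1, sum_powersetCard_succ Bl k
        (fun A i => ∑ l ∈ Bl \ A, act (Equiv.swap i l) (u (insert i A))),
      sum_powersetCard_succ Bl k
        (fun A i => ∑ l ∈ Bl \ A, act (Equiv.swap i l) (u (insert l A)))]
    refine Finset.sum_congr rfl (fun A _ => ?_)
    rw [Finset.sum_comm]
    simp only [Equiv.swap_comm]

lemma step_iter_pure (Bl : Finset Pos) {u : Finset Pos → (Pos ≃ S) → ℝ}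
    (hu : ∀ B, u B ∈ pureOn B) (t : ℕ) : ∀ B, ((step Bl)^[t] u) B ∈ pureOn B := by
  induction t with
  | zero => exact hu
  | succ t ih =>
    rw [Function.iterate_succ_apply']
    exact step_pure Bl ih

lemma gen_pow_field (Bl : Finset Pos) (k t : ℕ) {u : Finset Pos → (Pos ≃ S) → ℝ}
    (hu : ∀ B, u B ∈ pureOn B) :
    (gen Bl ^ t) (∑ A ∈ Bl.powersetCard k, u A)
      = ∑ A ∈ Bl.powersetCard k, ((step Bl)^[t] u) A := by
  induction t with
  | zero => simp
  | succ t ih =>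
    rw [pow_succ', Module.End.mul_apply, ih, gen_field Bl k (step_iter_pure Bl hu t),
      Function.iterate_succ_apply']

/-- Squared norm of the degree-`k` part of a field. -/
def fieldNorm (Bl : Finset Pos) (k : ℕ) (u : Finset Pos → (Pos ≃ S) → ℝ) : ℝ :=
  ∑ A ∈ Bl.powersetCard k, u A ⬝ᵥ u A

lemma dot_self_nonneg {X : Type*} [Fintype X] (f : X → ℝ) : 0 ≤ f ⬝ᵥ f :=
  Finset.sum_nonneg (fun _ _ => mul_self_nonneg _)

lemma dot_sum_self_le {X ι : Type*} [Fintype X] (s : Finset ι) (f : ι → X → ℝ) :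
    (∑ i ∈ s, f i) ⬝ᵥ (∑ i ∈ s, f i) ≤ s.card * ∑ i ∈ s, f i ⬝ᵥ f i := by
  simp only [dotProduct]
  rw [Finset.sum_comm, Finset.mul_sum]
  refine Finset.sum_le_sum (fun x _ => ?_)
  simp only [Finset.sum_apply, ← pow_two]
  exact sq_sum_le_card_mul_sum_sq

/-- Lifting one ball of the indexing set to the auxiliary vacant position `d`. -/
def liftF (Bl : Finset Pos) (d : Pos) (u : Finset Pos → (Pos ≃ S) → ℝ) :
    Finset Pos → (Pos ≃ S) → ℝ :=
  fun A => ∑ i ∈ Bl \ A, act (Equiv.swap d i) (u (insert i A))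

/-- The adjoint of `liftF`: the lifted ball is put back. -/
def dropF (d : Pos) (v : Finset Pos → (Pos ≃ S) → ℝ) : Finset Pos → (Pos ≃ S) → ℝ :=
  fun A => ∑ i ∈ A, act (Equiv.swap d i) (v (A.erase i))

lemma drop_lift {Bl : Finset Pos} {d : Pos} (hd : d ∉ Bl) {u : Finset Pos → (Pos ≃ S) → ℝ}
    (hu : ∀ B, u B ∈ pureOn B) {A : Finset Pos} (hA : A ⊆ Bl) :
    dropF d (liftF Bl d u) A
      = ∑ i ∈ A, ∑ l ∈ Bl \ A.erase i, act (Equiv.swap i l) (u (insert l (A.erase i))) := by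
  simp only [dropF, liftF, map_sum]
  refine Finset.sum_congr rfl (fun i hi => Finset.sum_congr rfl (fun l hl => ?_))
  rw [act_act]
  refine depOn_congr (hu _).1 (fun p hp => ?_)
  have hdi : d ≠ i := by rintro rfl; exact hd (hA hi)
  have hdl : d ≠ l := by rintro rfl; exact hd (Finset.mem_sdiff.1 hl).1
  rcases Finset.mem_insert.1 hp with rfl | hp₁
  · simp
  · have hpd : p ≠ d := by rintro rfl; exact hd (hA (Finset.mem_erase.1 hp₁).2)
    have hpi : p ≠ i := (Finset.mem_erase.1 hp₁).1
    have hpl : p ≠ l := by rintro rfl; exact (Finset.mem_sdiff.1 hl).2 hp₁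
    rw [Equiv.Perm.mul_apply, Equiv.swap_apply_of_ne_of_ne hpd hpl,
      Equiv.swap_apply_of_ne_of_ne hpd hpi, Equiv.swap_apply_of_ne_of_ne hpi hpl]

lemma lift_dot_drop (Bl : Finset Pos) (d : Pos) (k : ℕ) (u v : Finset Pos → (Pos ≃ S) → ℝ) :
    ∑ A ∈ Bl.powersetCard (k + 1), u A ⬝ᵥ dropF d v A
      = ∑ A ∈ Bl.powersetCard k, liftF Bl d u A ⬝ᵥ v A := by
  simp only [dropF, liftF, dotProduct_sum, sum_dotProduct, act_swap_dot]
  rw [← sum_powersetCard_succ Bl k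
    (fun A i => u (insert i A) ⬝ᵥ act (Equiv.swap d i) (v A))]
  refine Finset.sum_congr rfl (fun A _ => Finset.sum_congr rfl (fun i hi => ?_))
  rw [Finset.insert_erase hi]

lemma drop_norm_le (Bl : Finset Pos) (d : Pos) (k : ℕ) (hk : k ≤ Bl.card)
    (v : Finset Pos → (Pos ≃ S) → ℝ) :
    fieldNorm Bl (k + 1) (dropF d v)
      ≤ ((k + 1 : ℕ) : ℝ) * ((Bl.card : ℝ) - k) * fieldNorm Bl k v := by
  calc fieldNorm Bl (k + 1) (dropF d v)
      ≤ ∑ A ∈ Bl.powersetCard (k + 1), ((k + 1 : ℕ) : ℝ) *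
          ∑ i ∈ A, (v (A.erase i) ⬝ᵥ v (A.erase i)) := by
        refine Finset.sum_le_sum (fun A hA => ?_)
        refine (dot_sum_self_le _ _).trans (le_of_eq ?_)
        rw [(Finset.mem_powersetCard.1 hA).2]
        simp only [act_dot_act]
    _ = ((k + 1 : ℕ) : ℝ) * ((Bl.card : ℝ) - k) * fieldNorm Bl k v := by
        rw [← Finset.mul_sum, sum_powersetCard_succ (M := ℝ) Bl k (fun A _ => v A ⬝ᵥ v A), mul_assoc,
          fieldNorm]
        rw [Finset.mul_sum (a := (Bl.card : ℝ) - k)]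
        refine congrArg _ ?_
        refine Finset.sum_congr rfl (fun A hA => ?_)
        obtain ⟨h1, h2⟩ := Finset.mem_powersetCard.1 hA
        rw [Finset.sum_const, Finset.card_sdiff_of_subset h1, h2, nsmul_eq_mul, Nat.cast_sub hk]

/-- On fields of degree `k` the step has norm at most `rate Bl k`: it is `rate - L* L`, where the
lifting operator `L` satisfies `‖L‖² ≤ rate`. The bound on `‖L‖` uses that there are at
least as many vacant positions as balls. -/
lemma step_norm_le {Bl : Finset Pos} (hBl : Bl.card ≤ Blᶜ.card) {k : ℕ} (hk : k ≤ Bl.card)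
    {u : Finset Pos → (Pos ≃ S) → ℝ} (hu : ∀ B, u B ∈ pureOn B) :
    fieldNorm Bl k (step Bl u) ≤ rate Bl k ^ 2 * fieldNorm Bl k u := by
  cases k with
  | zero =>
    simp [fieldNorm, step]
    apply le_of_eq; ring
  | succ k =>
    obtain ⟨d, hd⟩ : (Blᶜ).Nonempty := by rw [← Finset.card_pos]; omega
    rw [Finset.mem_compl] at hd
    set L := liftF Bl d u with hL
    have hstep : ∀ A ∈ Bl.powersetCard (k + 1),
        step Bl u A = rate Bl (k + 1) • u A - dropF d L A := by
      intro A hA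
      obtain ⟨h1, h2⟩ := Finset.mem_powersetCard.1 hA
      rw [step, drop_lift hd hu h1, h2]
    have hexp : fieldNorm Bl (k + 1) (step Bl u)
        = rate Bl (k + 1) ^ 2 * fieldNorm Bl (k + 1) u
          - 2 * rate Bl (k + 1) * fieldNorm Bl k L + fieldNorm Bl (k + 1) (dropF d L) := by
      have : fieldNorm Bl k L = ∑ A ∈ Bl.powersetCard (k + 1), u A ⬝ᵥ dropF d L A :=
        (lift_dot_drop Bl d k u L).symm
      rw [this]
      simp only [fieldNorm, Finset.mul_sum]
      rw [← Finset.sum_sub_distrib, ← Finset.sum_add_distrib]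
      refine Finset.sum_congr rfl (fun A hA => ?_)
      rw [hstep A hA]
      simp only [sub_dotProduct, dotProduct_sub, smul_dotProduct, dotProduct_smul, smul_eq_mul]
      rw [dotProduct_comm (dropF d L A) (u A)]
      ring
    have hLn : 0 ≤ fieldNorm Bl k L := Finset.sum_nonneg (fun A _ => dot_self_nonneg _)
    have hd' := drop_norm_le Bl d k (by omega) L
    have hr : ((k + 1 : ℕ) : ℝ) * ((Bl.card : ℝ) - k) ≤ rate Bl (k + 1) := by
      have h1 : ((k + 1 : ℕ) : ℝ) ≤ Bl.card := by exact_mod_cast hk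
      have h2 : (Bl.card : ℝ) ≤ Blᶜ.card := by exact_mod_cast hBl
      rw [rate]
      push_cast at *
      nlinarith
    have hr0 : 0 ≤ ((k + 1 : ℕ) : ℝ) * ((Bl.card : ℝ) - k) := by
      have h1 : ((k + 1 : ℕ) : ℝ) ≤ Bl.card := by exact_mod_cast hk
      push_cast at *
      apply mul_nonneg <;> linarith
    rw [hexp]
    nlinarith [mul_le_mul_of_nonneg_right hr hLn, mul_nonneg (hr0.trans hr) hLn]

lemma step_iter_norm_le {Bl : Finset Pos} (hBl : Bl.card ≤ Blᶜ.card) {k : ℕ} (hk : k ≤ Bl.card)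
    {u : Finset Pos → (Pos ≃ S) → ℝ} (hu : ∀ B, u B ∈ pureOn B) (t : ℕ) :
    fieldNorm Bl k ((step Bl)^[t] u) ≤ (rate Bl k ^ t) ^ 2 * fieldNorm Bl k u := by
  induction t with
  | zero => simp
  | succ t ih =>
    rw [Function.iterate_succ_apply']
    refine (step_norm_le hBl hk (step_iter_pure Bl hu t)).trans ?_
    calc _ ≤ rate Bl k ^ 2 * ((rate Bl k ^ t) ^ 2 * fieldNorm Bl k u) :=
          mul_le_mul_of_nonneg_left ih (sq_nonneg _)
      _ = _ := by ring

end Generator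

/-! ### Separating the pure parts of one degree -/

section Flips

variable {Pos S : Type*} [Fintype Pos] [DecidableEq Pos] [Fintype S] [DecidableEq S]
variable {φ : Pos → Pos}

/-- The permutation exchanging every `p ∈ ε` with its partner `φ p`. -/
def flipPerm (hφ : Function.Involutive φ) (ε : Finset Pos) : Equiv.Perm Pos :=
  Function.Involutive.toPerm (fun p => if p ∈ ε ∨ φ p ∈ ε then φ p else p) (by
    intro p
    by_cases h : p ∈ ε ∨ φ p ∈ ε
    · simp only [h, if_true, hφ p]
      rw [if_pos h.symm]
    · simp only [h, if_false])

lemma flip_apply (hφ : Function.Involutive φ) (ε : Finset Pos) (p : Pos) :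
    flipPerm hφ ε p = if p ∈ ε ∨ φ p ∈ ε then φ p else p := rfl

lemma flip_mem (hφ : Function.Involutive φ) {ε : Finset Pos} {p : Pos} (h : p ∈ ε) :
    flipPerm hφ ε p = φ p := by simp [flip_apply, h]

lemma flip_notMem (hφ : Function.Involutive φ) {ε : Finset Pos} {p : Pos} (h : p ∉ ε)
    (h' : φ p ∉ ε) : flipPerm hφ ε p = p := by simp [flip_apply, h, h']

lemma flip_inv (hφ : Function.Involutive φ) (ε : Finset Pos) : (flipPerm hφ ε)⁻¹ = flipPerm hφ ε := rfl

lemma flip_empty (hφ : Function.Involutive φ) : flipPerm hφ ∅ = 1 := by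
  ext p; simp [flip_apply]

lemma act_flip_dot (hφ : Function.Involutive φ) (ε : Finset Pos) (f g : (Pos ≃ S) → ℝ) :
    act (flipPerm hφ ε) f ⬝ᵥ g = f ⬝ᵥ act (flipPerm hφ ε) g := by
  rw [act_dot, flip_inv]

lemma flip_mul (hφ : Function.Involutive φ) {Bl ε δ : Finset Pos}
    (hdis : ∀ p ∈ Bl, φ p ∉ Bl) (hε : ε ⊆ Bl) (hδ : δ ⊆ Bl) :
    flipPerm hφ ε * flipPerm hφ δ = flipPerm hφ (symmDiff ε δ) := by
  ext p
  have key : ∀ q, q ∈ ε ∨ q ∈ δ → φ q ∉ ε ∧ φ q ∉ δ := by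
    intro q hq
    have hqB : q ∈ Bl := hq.elim (fun h => hε h) (fun h => hδ h)
    exact ⟨fun h => hdis q hqB (hε h), fun h => hdis q hqB (hδ h)⟩
  have k1 := key p
  have k2 := key (φ p)
  rw [hφ p] at k2
  rw [Equiv.Perm.mul_apply]
  simp only [flip_apply, Finset.mem_symmDiff]
  by_cases a : p ∈ ε <;> by_cases b : p ∈ δ <;> by_cases c : φ p ∈ ε <;>
    by_cases d : φ p ∈ δ <;> simp_all [hφ p]

lemma flip_singleton_inv (hφ : Function.Involutive φ) {Bl B : Finset Pos}
    (hdis : ∀ p ∈ Bl, φ p ∉ Bl) (hB : B ⊆ Bl) {i : Pos} (hi : i ∈ Bl) (hiB : i ∉ B)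
    {u : (Pos ≃ S) → ℝ} (hu : u ∈ depOn B) : act (flipPerm hφ {i}) u = u := by
  refine depOn_inv hu (fun b hb => flip_notMem hφ ?_ ?_)
  · rw [Finset.mem_singleton]; rintro rfl; exact hiB hb
  · rw [Finset.mem_singleton]; intro h; exact hdis b (hB hb) (h ▸ hi)

/-- The permutations of the positions that move only points of `ε`. -/
def permsOf (ε : Finset Pos) : Finset (Equiv.Perm Pos) :=
  Finset.univ.filter (fun π => ∀ p, p ∉ ε → π p = p)

lemma mem_permsOf {ε : Finset Pos} {π : Equiv.Perm Pos} :
    π ∈ permsOf ε ↔ ∀ p, p ∉ ε → π p = p := by simp [permsOf]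

lemma inv_permsOf {ε : Finset Pos} {π : Equiv.Perm Pos} (h : π ∈ permsOf ε) :
    ∀ p, p ∉ ε → π⁻¹ p = p := fun p hp => by
  rw [Equiv.Perm.inv_eq_iff_eq, mem_permsOf.1 h p hp]

/-- Coset decomposition of the permutations of `insert p ε` modulo those of `ε`. -/
lemma sum_permsOf_insert {M : Type*} [AddCommMonoid M] {ε : Finset Pos} {p : Pos} (hp : p ∉ ε)
    (F : Equiv.Perm Pos → M) :
    ∑ σ ∈ permsOf (insert p ε), F σ
      = ∑ a ∈ insert p ε, ∑ π ∈ permsOf ε, F (π * Equiv.swap p a) := by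
  rw [Finset.sum_sigma']
  symm
  refine Finset.sum_bij' (fun x _ => x.2 * Equiv.swap p x.1)
    (fun σ _ => ⟨σ⁻¹ p, σ * Equiv.swap p (σ⁻¹ p)⟩) ?_ ?_ ?_ ?_ ?_
  · rintro ⟨a, π⟩ h
    obtain ⟨ha, hπ⟩ := Finset.mem_sigma.1 h
    simp only at ha hπ
    rw [mem_permsOf] at hπ ⊢
    intro q hq
    rw [Finset.mem_insert, not_or] at hq
    have hqa : q ≠ a := by
      rintro rfl; rcases Finset.mem_insert.1 ha with h | h
      · exact hq.1 h
      · exact hq.2 h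
    rw [Equiv.Perm.mul_apply, Equiv.swap_apply_of_ne_of_ne hq.1 hqa, hπ q hq.2]
  · intro σ hσ
    have hσ' := mem_permsOf.1 hσ
    refine Finset.mem_sigma.2 ⟨?_, ?_⟩
    · by_contra h
      have h1 : σ (σ⁻¹ p) = σ⁻¹ p := hσ' _ h
      have h2 : σ (σ⁻¹ p) = p := by simp
      have h3 : σ⁻¹ p ∉ insert p ε := h
      rw [← h1, h2] at h3
      exact h3 (Finset.mem_insert_self _ _)
    · rw [mem_permsOf]
      intro q hq
      simp only [Equiv.Perm.mul_apply]
      by_cases hqp : q = p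
      · subst hqp; simp
      · have h1 := hσ' q (by simp [hqp, hq])
        have : q ≠ σ⁻¹ p := by
          intro h
          rw [h] at h1; simp at h1
          exact hqp (h.trans h1.symm)
        rw [Equiv.swap_apply_of_ne_of_ne hqp this, h1]
  · rintro ⟨a, π⟩ h
    obtain ⟨ha, hπ⟩ := Finset.mem_sigma.1 h
    simp only at ha hπ
    have h1 : (π * Equiv.swap p a)⁻¹ p = a := by
      rw [mul_inv_rev, Equiv.Perm.mul_apply, inv_permsOf hπ p hp]; simp
    simp only [h1, mul_assoc, Equiv.swap_mul_self, mul_one]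
  · intro σ _
    simp [mul_assoc]
  · rintro ⟨a, π⟩ _
    rfl

/-- The sum over `π` is, up to a positive factor, the squared norm of the symmetrisation of `u`. -/
lemma sum_permsOf_nonneg (ε : Finset Pos) (u : (Pos ≃ S) → ℝ) :
    0 ≤ ∑ π ∈ permsOf ε, u ⬝ᵥ act π u := by
  have h1 : (∑ π ∈ permsOf ε, act π u) ⬝ᵥ (∑ π ∈ permsOf ε, act π u)
      = (permsOf ε).card * ∑ π ∈ permsOf ε, u ⬝ᵥ act π u := by
    rw [sum_dotProduct, ← nsmul_eq_mul, ← Finset.sum_const]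
    refine Finset.sum_congr rfl (fun π hπ => ?_)
    rw [dotProduct_sum]
    refine Finset.sum_equiv (Equiv.mulLeft π⁻¹) (fun τ => ?_) (fun τ _ => ?_)
    · simp only [Equiv.coe_mulLeft, mem_permsOf, Equiv.Perm.mul_apply]
      refine forall₂_congr (fun p hp => ?_)
      rw [Equiv.Perm.inv_eq_iff_eq, mem_permsOf.1 hπ p hp]
    · rw [act_dot, act_act]; rfl
  have h2 := dot_self_nonneg (∑ π ∈ permsOf ε, act π u)
  rw [h1] at h2
  have h3 : 0 < ((permsOf ε).card : ℝ) := by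
    have : (1 : Equiv.Perm Pos) ∈ permsOf ε := by simp [mem_permsOf]
    exact_mod_cast Finset.card_pos.2 ⟨1, this⟩
  exact nonneg_of_mul_nonneg_right h2 h3

/-- Exchanging positions of `ε` with partners outside `A` acts on pure functions, up to a positive
factor and the sign `(-1)^|ε|`, as symmetrisation over the positions of `ε`. -/
lemma flip_sign (hφ : Function.Involutive φ) {Bl A : Finset Pos} (hdis : ∀ p ∈ Bl, φ p ∉ Bl)
    (hA : A ⊆ Bl) (ε : Finset Pos) : ε ⊆ A → ∃ c : ℝ, 0 < c ∧
      ∀ u v : (Pos ≃ S) → ℝ, u ∈ pureOn A → v ∈ pureOn A →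
        (-1) ^ ε.card * c * (u ⬝ᵥ act (flipPerm hφ ε) v) = ∑ π ∈ permsOf ε, u ⬝ᵥ act π v := by
  induction ε using Finset.induction_on with
  | empty =>
    intro _
    refine ⟨1, one_pos, fun u v _ _ => ?_⟩
    have : permsOf (∅ : Finset Pos) = {1} := by
      ext π; simp only [mem_permsOf, Finset.mem_singleton]
      constructor
      · intro h; ext p; exact h p (by simp)
      · rintro rfl; simp
    rw [this, Finset.sum_singleton, flip_empty]; simp
  | insert p ε hp ih =>
    intro hE
    have hpA : p ∈ A := hE (Finset.mem_insert_self _ _)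
    have hεA : ε ⊆ A := (Finset.subset_insert _ _).trans hE
    obtain ⟨c, hc, ihc⟩ := ih hεA
    have hout : ∀ a ∈ A, φ a ∉ A := fun a ha h => hdis a (hA ha) (hA h)
    have hinj : Function.Injective φ := hφ.injective
    set E := insert p ε with hEdef
    -- positions with which `p` can be exchanged without changing `act (flipPerm E) v`
    set R : Finset Pos := (A.erase p)ᶜ \ E.image φ with hR
    have hpR : p ∈ R := by
      simp only [hR, Finset.mem_sdiff, Finset.mem_compl, Finset.mem_image, not_exists, not_and]
      refine ⟨Finset.notMem_erase _ _, fun a ha h => hout a (hE ha) (h ▸ hpA)⟩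
    refine ⟨c * R.card, mul_pos hc (by exact_mod_cast Finset.card_pos.2 ⟨p, hpR⟩),
      fun u v hu hv => ?_⟩
    have hsub : E.image φ ⊆ (A.erase p)ᶜ := by
      intro q hq
      obtain ⟨a, ha, rfl⟩ := Finset.mem_image.1 hq
      rw [Finset.mem_compl]
      exact fun h => hout a (hE ha) (Finset.mem_of_mem_erase h)
    have h0 : (∑ q ∈ (A.erase p)ᶜ, act (Equiv.swap p q) u) ⬝ᵥ act (flipPerm hφ E) v = 0 := by
      rw [hu.2 p hpA, zero_dotProduct]
    rw [sum_dotProduct, ← Finset.sum_sdiff hsub, Finset.sum_image (fun a _ b _ h => hinj h)] at h0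
    have hg : act (flipPerm hφ E) v ∈ (depOn ((A \ E) ∪ E.image φ) : Submodule ℝ ((Pos ≃ S) → ℝ)) := by
      refine act_mem_depOn hv.1 _ (fun a ha => ?_)
      by_cases haE : a ∈ E
      · rw [flip_mem hφ haE]
        exact Finset.mem_union_right _ (Finset.mem_image_of_mem _ haE)
      · rw [flip_notMem hφ haE (fun h => hout a ha (hE h))]
        exact Finset.mem_union_left _ (Finset.mem_sdiff.2 ⟨ha, haE⟩)
    have hpE : p ∈ E := Finset.mem_insert_self _ _
    have hp1 : p ∉ (A \ E) ∪ E.image φ := by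
      simp only [hR, Finset.mem_sdiff, Finset.mem_union] at hpR ⊢
      rintro (h | h)
      · exact h.2 hpE
      · exact hpR.2 h
    have hRsum : ∑ q ∈ R, act (Equiv.swap p q) u ⬝ᵥ act (flipPerm hφ E) v
        = R.card * (u ⬝ᵥ act (flipPerm hφ E) v) := by
      rw [← nsmul_eq_mul, ← Finset.sum_const]
      refine Finset.sum_congr rfl (fun q hq => ?_)
      rw [act_swap_dot, depOn_swap hg hp1]
      simp only [hR, Finset.mem_sdiff, Finset.mem_union, Finset.mem_compl, Finset.mem_erase] at hq ⊢
      rintro (h | h)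
      · exact hq.1 ⟨fun h' => h.2 (h' ▸ hpE), h.1⟩
      · exact hq.2 h
    have hEsum : ∀ a ∈ E, act (Equiv.swap p (φ a)) u ⬝ᵥ act (flipPerm hφ E) v
        = u ⬝ᵥ act (flipPerm hφ ε) (act (Equiv.swap p a) v) := by
      intro a ha
      have haA := hE ha
      have hinvu : act (Equiv.swap (φ p) (φ a)) u = u :=
        depOn_swap hu.1 (hout p hpA) (hout a haA)
      rw [← hinvu, act_swap_dot (φ p), hinvu, act_swap_dot, act_act, act_act, act_act]
      refine congrArg _ (depOn_congr hv.1 (fun b hb => ?_))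
      have hbp : b ≠ φ p := fun h => hout p hpA (h ▸ hb)
      have hba : b ≠ φ a := fun h => hout a haA (h ▸ hb)
      have hpp : p ≠ φ p := fun h => hout p hpA (h ▸ hpA)
      have hpa : p ≠ φ a := fun h => hout a haA (h ▸ hpA)
      have hflp : flipPerm hφ ε p = p := flip_notMem hφ hp (fun h => hout p hpA (hεA h))
      simp only [Equiv.Perm.mul_apply]
      by_cases h1 : b = a
      · subst h1
        rw [flip_mem hφ ha, Equiv.swap_apply_right, Equiv.swap_apply_right, hflp,
          Equiv.swap_apply_of_ne_of_ne hpp hpa]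
      · by_cases h2 : b = p
        · subst h2
          have haε : a ∈ ε := (Finset.mem_insert.1 ha).resolve_left (fun h => h1 h.symm)
          rw [flip_mem hφ hpE, Equiv.swap_apply_left, flip_mem hφ haε, Equiv.swap_apply_right,
            Equiv.swap_apply_of_ne_of_ne hpp.symm (fun h => h1 (hinj h))]
        · rw [Equiv.swap_apply_of_ne_of_ne h2 h1]
          by_cases h3 : b ∈ ε
          · rw [flip_mem hφ h3, flip_mem hφ (Finset.mem_insert_of_mem h3),
              Equiv.swap_apply_of_ne_of_ne (fun h => hout b hb (by rw [h]; exact hpA)) (fun h => h1 (hinj h)),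
              Equiv.swap_apply_of_ne_of_ne (fun h => h2 (hinj h)) (fun h => h1 (hinj h))]
          · rw [flip_notMem hφ h3 (fun h => hout b hb (hεA h)),
              flip_notMem hφ (fun h => h3 ((Finset.mem_insert.1 h).resolve_left h2))
                (fun h => hout b hb (hE h)),
              Equiv.swap_apply_of_ne_of_ne h2 hba, Equiv.swap_apply_of_ne_of_ne hbp hba]
    rw [hRsum, Finset.sum_congr rfl hEsum] at h0
    rw [sum_permsOf_insert hp, Finset.card_insert_of_notMem hp]
    have h1 : ∀ a ∈ E, ∑ π ∈ permsOf ε, u ⬝ᵥ act (π * Equiv.swap p a) v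
        = (-1) ^ ε.card * c * (u ⬝ᵥ act (flipPerm hφ ε) (act (Equiv.swap p a) v)) := by
      intro a ha
      rw [ihc u _ hu (swap_mem_pureOn_self hpA (hE ha) hv)]
      rfl
    rw [Finset.sum_congr rfl h1, ← Finset.mul_sum, pow_succ]
    linear_combination (-1) ^ (ε.card + 1) * c * h0

lemma flip_sign_nonneg (hφ : Function.Involutive φ) {Bl A : Finset Pos}
    (hdis : ∀ p ∈ Bl, φ p ∉ Bl) (hA : A ⊆ Bl) {ε : Finset Pos} (hε : ε ⊆ A)
    {u : (Pos ≃ S) → ℝ} (hu : u ∈ pureOn A) :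
    0 ≤ (-1) ^ ε.card * (u ⬝ᵥ act (flipPerm hφ ε) u) := by
  obtain ⟨c, hc, h⟩ := flip_sign (S := S) hφ hdis hA ε hε
  have h1 := sum_permsOf_nonneg ε u
  rw [← h u u hu hu] at h1
  have h2 : 0 ≤ c * ((-1) ^ ε.card * (u ⬝ᵥ act (flipPerm hφ ε) u)) := by linarith
  exact nonneg_of_mul_nonneg_right h2 hc

/-- The product over `p ∈ A` of the differences `1 - act (swap p (φ p))`, expanded. -/
def diffOp (hφ : Function.Involutive φ) (A : Finset Pos) :
    ((Pos ≃ S) → ℝ) →ₗ[ℝ] ((Pos ≃ S) → ℝ) :=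
  ∑ ε ∈ A.powerset, (-1 : ℝ) ^ ε.card • act (flipPerm hφ ε)

lemma diffOp_apply (hφ : Function.Involutive φ) (A : Finset Pos) (f : (Pos ≃ S) → ℝ) :
    diffOp hφ A f = ∑ ε ∈ A.powerset, (-1 : ℝ) ^ ε.card • act (flipPerm hφ ε) f := by
  simp [diffOp, LinearMap.sum_apply]

lemma diffOp_dot (hφ : Function.Involutive φ) (A : Finset Pos) (f g : (Pos ≃ S) → ℝ) :
    diffOp hφ A f ⬝ᵥ g = f ⬝ᵥ diffOp hφ A g := by
  simp only [diffOp_apply, sum_dotProduct, dotProduct_sum, smul_dotProduct, dotProduct_smul,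
    act_flip_dot]

lemma diffOp_act (hφ : Function.Involutive φ) {Bl A δ : Finset Pos} (hdis : ∀ p ∈ Bl, φ p ∉ Bl)
    (hA : A ⊆ Bl) (hδ : δ ⊆ Bl) (f : (Pos ≃ S) → ℝ) :
    diffOp hφ A (act (flipPerm hφ δ) f) = act (flipPerm hφ δ) (diffOp hφ A f) := by
  simp only [diffOp_apply, map_sum, map_smul]
  refine Finset.sum_congr rfl (fun ε hε => ?_)
  have hε' := (Finset.mem_powerset.1 hε).trans hA
  rw [act_act, act_act, flip_mul hφ hdis hε' hδ, flip_mul hφ hdis hδ hε', symmDiff_comm]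

lemma diffOp_comm (hφ : Function.Involutive φ) {Bl A B : Finset Pos} (hdis : ∀ p ∈ Bl, φ p ∉ Bl)
    (hA : A ⊆ Bl) (hB : B ⊆ Bl) (f : (Pos ≃ S) → ℝ) :
    diffOp hφ A (diffOp hφ B f) = diffOp hφ B (diffOp hφ A f) := by
  rw [diffOp_apply hφ B, diffOp_apply hφ B, map_sum]
  refine Finset.sum_congr rfl (fun ε hε => ?_)
  rw [map_smul, diffOp_act hφ hdis hA ((Finset.mem_powerset.1 hε).trans hB)]

lemma neg_one_pow_symmDiff (ε δ : Finset Pos) :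
    (-1 : ℝ) ^ (symmDiff ε δ).card = (-1) ^ ε.card * (-1) ^ δ.card := by
  have h1 : (symmDiff ε δ).card = (ε \ δ).card + (δ \ ε).card := by
    rw [symmDiff_def, Finset.sup_eq_union, Finset.card_union_of_disjoint disjoint_sdiff_sdiff]
  have h2 := Finset.card_sdiff_add_card_inter ε δ
  have h3 := Finset.card_sdiff_add_card_inter δ ε
  rw [Finset.inter_comm δ ε] at h3
  rw [h1, ← h2, ← h3, ← pow_add]
  rw [show (ε \ δ).card + (ε ∩ δ).card + ((δ \ ε).card + (ε ∩ δ).card)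
    = (ε \ δ).card + (δ \ ε).card + 2 * (ε ∩ δ).card by ring, pow_add _ _ (2 * _), pow_mul]
  simp

lemma diffOp_flip (hφ : Function.Involutive φ) {Bl A δ : Finset Pos} (hdis : ∀ p ∈ Bl, φ p ∉ Bl)
    (hA : A ⊆ Bl) (hδ : δ ⊆ A) (f : (Pos ≃ S) → ℝ) :
    diffOp hφ A (act (flipPerm hφ δ) f) = (-1 : ℝ) ^ δ.card • diffOp hφ A f := by
  rw [diffOp_apply, diffOp_apply, Finset.smul_sum]
  refine Finset.sum_bij' (fun ε _ => symmDiff ε δ) (fun ε _ => symmDiff ε δ) ?_ ?_ ?_ ?_ ?_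
  · intro ε hε
    rw [Finset.mem_powerset] at *
    exact (Finset.symmDiff_subset_union).trans (Finset.union_subset hε hδ)
  · intro ε hε
    rw [Finset.mem_powerset] at *
    exact (Finset.symmDiff_subset_union).trans (Finset.union_subset hε hδ)
  · intro ε _; simp
  · intro ε _; simp
  · intro ε hε
    rw [act_act, flip_mul hφ hdis ((Finset.mem_powerset.1 hε).trans hA) (hδ.trans hA),
      neg_one_pow_symmDiff, smul_smul, mul_comm ((-1 : ℝ) ^ ε.card), ← mul_assoc, ← pow_add,
      ← two_mul, pow_mul]
    simp

lemma diffOp_zero (hφ : Function.Involutive φ) {Bl A B : Finset Pos} (hdis : ∀ p ∈ Bl, φ p ∉ Bl)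
    (hA : A ⊆ Bl) (hB : B ⊆ Bl) {i : Pos} (hiA : i ∈ A) (hiB : i ∉ B)
    {u : (Pos ≃ S) → ℝ} (hu : u ∈ depOn B) : diffOp hφ A u = 0 := by
  have h1 := diffOp_flip hφ hdis hA (Finset.singleton_subset_iff.2 hiA) u
  rw [flip_singleton_inv hφ hdis hB (hA hiA) hiB hu, Finset.card_singleton, pow_one,
    neg_one_smul] at h1
  exact self_eq_neg.1 h1

lemma diffOp_diffOp (hφ : Function.Involutive φ) {Bl A : Finset Pos} (hdis : ∀ p ∈ Bl, φ p ∉ Bl)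
    (hA : A ⊆ Bl) (f : (Pos ≃ S) → ℝ) :
    diffOp hφ A (diffOp hφ A f) = (2 : ℝ) ^ A.card • diffOp hφ A f := by
  conv_lhs => rw [diffOp_apply hφ A f, map_sum]
  have : ∀ ε ∈ A.powerset, diffOp hφ A ((-1 : ℝ) ^ ε.card • act (flipPerm hφ ε) f)
      = diffOp hφ A f := by
    intro ε hε
    rw [map_smul, diffOp_flip hφ hdis hA (Finset.mem_powerset.1 hε), smul_smul, ← pow_add,
      ← two_mul, pow_mul]
    simp
  rw [Finset.sum_congr rfl this, Finset.sum_const, Finset.card_powerset, ← Nat.cast_smul_eq_nsmul ℝ]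
  simp

lemma le_dot_diffOp (hφ : Function.Involutive φ) {Bl A : Finset Pos} (hdis : ∀ p ∈ Bl, φ p ∉ Bl)
    (hA : A ⊆ Bl) {u : (Pos ≃ S) → ℝ} (hu : u ∈ pureOn A) : u ⬝ᵥ u ≤ u ⬝ᵥ diffOp hφ A u := by
  rw [diffOp_apply, dotProduct_sum]
  have h := Finset.single_le_sum (s := A.powerset)
    (f := fun ε => u ⬝ᵥ ((-1 : ℝ) ^ ε.card • act (flipPerm hφ ε) u)) (fun ε hε => by
      rw [dotProduct_smul, smul_eq_mul]
      exact flip_sign_nonneg hφ hdis hA (Finset.mem_powerset.1 hε) hu)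
    (Finset.empty_mem_powerset A)
  simpa [flip_empty, act_one] using h

lemma dot_sq_le {X : Type*} [Fintype X] (f g : X → ℝ) :
    (f ⬝ᵥ g) ^ 2 ≤ (f ⬝ᵥ f) * (g ⬝ᵥ g) := by
  simp only [dotProduct, ← pow_two]
  exact Finset.sum_mul_sq_le_sq_mul_sq _ _ _

/-- A field of pure functions of degree `k` is controlled by its sum, at the cost of `2 ^ k`:
testing the sum against `∑ diffOp A (u A)` separates the different index sets. -/
lemma fieldNorm_le (hφ : Function.Involutive φ) {Bl : Finset Pos} (hdis : ∀ p ∈ Bl, φ p ∉ Bl)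
    (k : ℕ) {u : Finset Pos → (Pos ≃ S) → ℝ} (hu : ∀ B, u B ∈ pureOn B) :
    fieldNorm Bl k u ≤ 2 ^ k * ((∑ A ∈ Bl.powersetCard k, u A) ⬝ᵥ ∑ A ∈ Bl.powersetCard k, u A) := by
  set f := ∑ A ∈ Bl.powersetCard k, u A with hf
  set g := ∑ A ∈ Bl.powersetCard k, diffOp hφ A (u A) with hg
  have hne : ∀ A ∈ Bl.powersetCard k, ∀ B ∈ Bl.powersetCard k, B ≠ A → diffOp hφ A (u B) = 0 := by
    intro A hA B hB hAB
    obtain ⟨hA1, hA2⟩ := Finset.mem_powersetCard.1 hA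
    obtain ⟨hB1, hB2⟩ := Finset.mem_powersetCard.1 hB
    obtain ⟨i, hi, hi'⟩ : ∃ i ∈ A, i ∉ B := by
      by_contra! h
      exact hAB (Finset.eq_of_subset_of_card_le h (by rw [hA2, hB2])).symm
    exact diffOp_zero hφ hdis hA1 hB1 hi hi' (hu B).1
  have hfg : f ⬝ᵥ g = ∑ A ∈ Bl.powersetCard k, u A ⬝ᵥ diffOp hφ A (u A) := by
    rw [hg, dotProduct_sum]
    refine Finset.sum_congr rfl (fun A hA => ?_)
    rw [hf, sum_dotProduct]
    refine Finset.sum_eq_single_of_mem A hA (fun B hB hAB => ?_)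
    rw [← diffOp_dot, hne A hA B hB hAB, zero_dotProduct]
  have hgg : g ⬝ᵥ g = 2 ^ k * (f ⬝ᵥ g) := by
    rw [hfg, hg, dotProduct_sum, Finset.mul_sum]
    refine Finset.sum_congr rfl (fun A hA => ?_)
    obtain ⟨hA1, hA2⟩ := Finset.mem_powersetCard.1 hA
    rw [sum_dotProduct, Finset.sum_eq_single_of_mem A hA (fun B hB hAB => ?_)]
    · rw [diffOp_dot, diffOp_diffOp hφ hdis hA1, hA2, dotProduct_smul, smul_eq_mul]
    · rw [← diffOp_dot, diffOp_comm hφ hdis hA1 (Finset.mem_powersetCard.1 hB).1,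
        hne A hA B hB hAB, map_zero, zero_dotProduct]
  have h1 : fieldNorm Bl k u ≤ f ⬝ᵥ g := by
    rw [hfg]
    exact Finset.sum_le_sum (fun A hA =>
      le_dot_diffOp hφ hdis (Finset.mem_powersetCard.1 hA).1 (hu A))
  have h2 := dot_sq_le f g
  rw [hgg] at h2
  have h3 : 0 ≤ f ⬝ᵥ f := dot_self_nonneg f
  have h4 : 0 ≤ fieldNorm Bl k u := Finset.sum_nonneg (fun A _ => dot_self_nonneg _)
  refine h1.trans ?_
  rcases (h4.trans h1).eq_or_lt with h | h
  · rw [← h]; positivity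
  · refine le_of_mul_le_mul_right ?_ h
    linarith

end Flips

/-! ### Cylinder sets of placements -/

section Cylinders

variable {Pos S β : Type*} [Fintype Pos] [DecidableEq Pos] [Fintype S] [DecidableEq S]
  [Fintype β] [DecidableEq β]

/-- Indicator of the placements that put every position `p ∈ A` in the bin `x p`. -/
def cyl (bin : S → β) (x : Pos → β) (A : Finset Pos) : (Pos ≃ S) → ℝ :=
  fun η => if ∀ p ∈ A, bin (η p) = x p then 1 else 0

/-- Number of positions of `A` assigned to the bin `v`. -/
def load (x : Pos → β) (A : Finset Pos) (v : β) : ℕ := (A.filter (fun p => x p = v)).card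

/-- Number of placements in the cylinder. -/
def cylMass (bin : S → β) (x : Pos → β) (A : Finset Pos) : ℝ := cyl bin x A ⬝ᵥ 1

lemma cyl_mem_depOn (bin : S → β) (x : Pos → β) (A : Finset Pos) : cyl bin x A ∈ depOn A := by
  intro g hg
  ext η
  simp only [act_apply, cyl, Equiv.trans_apply]
  refine if_congr (forall₂_congr (fun p hp => ?_)) rfl rfl
  rw [hg p hp]

lemma one_mem_depOn (A : Finset Pos) : (1 : (Pos ≃ S) → ℝ) ∈ depOn A := fun _ _ => rfl

lemma cyl_dot_self (bin : S → β) (x : Pos → β) (A : Finset Pos) :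
    cyl bin x A ⬝ᵥ cyl bin x A = cylMass bin x A := by
  simp only [cylMass, dotProduct]
  refine Finset.sum_congr rfl (fun η _ => ?_)
  simp [cyl]

lemma card_fiber {bin : S → β} {κ : ℕ} (hbin : ∀ v, (Finset.univ.filter (fun s => bin s = v)).card = κ)
    (η : Pos ≃ S) (v : β) : (Finset.univ.filter (fun p => bin (η p) = v)).card = κ := by
  rw [← hbin v]
  refine Finset.card_bij (fun p _ => η p) ?_ ?_ ?_
  · intro p hp; simpa using hp
  · intro p _ q _ h; exact η.injective h
  · intro s hs; exact ⟨η.symm s, by simpa using hs, by simp⟩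

lemma card_free {bin : S → β} {κ : ℕ} (hbin : ∀ v, (Finset.univ.filter (fun s => bin s = v)).card = κ)
    {x : Pos → β} {A : Finset Pos} {η : Pos ≃ S} (hη : ∀ p ∈ A, bin (η p) = x p) (v : β) :
    (Aᶜ.filter (fun p => bin (η p) = v)).card = κ - load x A v := by
  have h1 := card_fiber hbin η v
  have h2 : load x A v = (A.filter (fun p => bin (η p) = v)).card := by
    rw [load]
    refine congrArg _ (Finset.filter_congr (fun p hp => ?_))
    rw [hη p hp]
  have h3 : (Finset.univ.filter (fun p => bin (η p) = v))
      = (A.filter (fun p => bin (η p) = v)) ∪ (Aᶜ.filter (fun p => bin (η p) = v)) := by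
    rw [← Finset.filter_union, Finset.union_compl]
  rw [h3, Finset.card_union_of_disjoint
    (Finset.disjoint_filter_filter disjoint_compl_right)] at h1
  omega

lemma act_swap_cyl (bin : S → β) (x : Pos → β) {A : Finset Pos} {p q : Pos} (hp : p ∉ A)
    (hq : q ∉ A) (η : Pos ≃ S) :
    act (Equiv.swap p q) (cyl bin x (insert p A)) η
      = cyl bin x A η * if bin (η q) = x p then 1 else 0 := by
  simp only [act_apply, cyl, Equiv.trans_apply, ← ite_and, Finset.forall_mem_insert,
    Equiv.swap_apply_left, ite_mul, one_mul, zero_mul]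
  refine if_congr ?_ rfl rfl
  rw [and_comm]
  refine and_congr (forall₂_congr (fun a ha => ?_)) Iff.rfl
  rw [Equiv.swap_apply_of_ne_of_ne (ne_of_mem_of_not_mem ha hp) (ne_of_mem_of_not_mem ha hq)]

/-- Averaging out the position `p` of a cylinder leaves the smaller cylinder, weighted by the number of
free slots in the bin of `p`. -/
lemma sum_act_swap_cyl {bin : S → β} {κ : ℕ}
    (hbin : ∀ v, (Finset.univ.filter (fun s => bin s = v)).card = κ)
    (x : Pos → β) {A : Finset Pos} {p : Pos} (hp : p ∉ A) :
    ∑ q ∈ Aᶜ, act (Equiv.swap p q) (cyl bin x (insert p A))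
      = ((κ - load x A (x p) : ℕ) : ℝ) • cyl bin x A := by
  ext η
  rw [Finset.sum_apply, Finset.sum_congr rfl
    (fun q hq => act_swap_cyl bin x hp (Finset.mem_compl.1 hq) η), ← Finset.mul_sum,
    Finset.sum_boole, Pi.smul_apply, smul_eq_mul]
  by_cases hη : ∀ p ∈ A, bin (η p) = x p
  · rw [card_free hbin hη, mul_comm]
  · simp [cyl, hη]

/-- Conditionally on the positions of `A`, the position `p` is uniform on the remaining slots. -/
lemma cyl_insert_dot {bin : S → β} {κ : ℕ}
    (hbin : ∀ v, (Finset.univ.filter (fun s => bin s = v)).card = κ)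
    (x : Pos → β) {A : Finset Pos} {p : Pos} (hp : p ∉ A) {u : (Pos ≃ S) → ℝ} (hu : u ∈ depOn A) :
    (Aᶜ.card : ℝ) * (cyl bin x (insert p A) ⬝ᵥ u)
      = ((κ - load x A (x p) : ℕ) : ℝ) * (cyl bin x A ⬝ᵥ u) := by
  rw [← smul_eq_mul _ (cyl bin x A ⬝ᵥ u), ← smul_dotProduct, ← sum_act_swap_cyl hbin x hp,
    sum_dotProduct,
    ← nsmul_eq_mul, ← Finset.sum_const]
  refine Finset.sum_congr rfl (fun q hq => ?_)
  rw [act_swap_dot, depOn_swap hu hp (Finset.mem_compl.1 hq)]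

/-- Conditionally on the cylinder over `A`, a function of `A` is uncorrelated with the cylinder over `B`. -/
lemma cyl_union_dot {bin : S → β} {κ : ℕ}
    (hbin : ∀ v, (Finset.univ.filter (fun s => bin s = v)).card = κ)
    (x : Pos → β) (A B : Finset Pos) {u : (Pos ≃ S) → ℝ} (hu : u ∈ depOn A) :
    (cyl bin x (A ∪ B) ⬝ᵥ u) * cylMass bin x A = (cyl bin x A ⬝ᵥ u) * cylMass bin x (A ∪ B) := by
  induction B using Finset.induction_on with
  | empty => simp
  | insert p B hp ih =>
    rw [Finset.union_insert]
    by_cases hpA : p ∈ A ∪ B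
    · rw [Finset.insert_eq_of_mem hpA]; exact ih
    · have h1 := cyl_insert_dot hbin x hpA (depOn_mono Finset.subset_union_left hu)
      have h2 := cyl_insert_dot hbin x hpA (one_mem_depOn (S := S) (A ∪ B))
      have h3 : (0 : ℝ) < ((A ∪ B)ᶜ.card : ℝ) := by
        exact_mod_cast Finset.card_pos.2 ⟨p, Finset.mem_compl.2 hpA⟩
      refine mul_left_cancel₀ h3.ne' ?_
      simp only [cylMass] at *
      rw [← mul_assoc, h1, mul_left_comm, h2, mul_assoc, ih]
      ring

lemma load_insert (x : Pos → β) {A : Finset Pos} {p : Pos} (hp : p ∉ A) (v : β) :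
    load x (insert p A) v = load x A v + if x p = v then 1 else 0 := by
  rw [load, load, Finset.filter_insert]
  split_ifs with h
  · rw [Finset.card_insert_of_notMem (by simp [hp])]
  · rfl

lemma cylMass_empty (bin : S → β) (x : Pos → β) :
    cylMass bin x ∅ = Fintype.card (Pos ≃ S) := by
  simp [cylMass, cyl, dotProduct]

lemma cylMass_eq {bin : S → β} {κ : ℕ}
    (hbin : ∀ v, (Finset.univ.filter (fun s => bin s = v)).card = κ)
    (x : Pos → β) (A : Finset Pos) :
    cylMass bin x A * ((Fintype.card Pos).descFactorial A.card : ℕ)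
      = Fintype.card (Pos ≃ S) * ∏ v, (κ.descFactorial (load x A v) : ℝ) := by
  induction A using Finset.induction_on with
  | empty => simp [cylMass_empty, load]
  | insert p A hp ih =>
    have h2 := cyl_insert_dot hbin x hp (one_mem_depOn (S := S) A)
    rw [Finset.card_compl] at h2
    have h3 : ∏ v, (κ.descFactorial (load x (insert p A) v) : ℝ)
        = ((κ - load x A (x p) : ℕ) : ℝ) * ∏ v, (κ.descFactorial (load x A v) : ℝ) := by
      rw [← Finset.mul_prod_erase Finset.univ _ (Finset.mem_univ (x p)),
        ← Finset.mul_prod_erase Finset.univ (fun v => (κ.descFactorial (load x A v) : ℝ))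
          (Finset.mem_univ (x p)), ← mul_assoc]
      congr 1
      · rw [load_insert x hp, if_pos rfl, Nat.descFactorial_succ]; push_cast; ring
      · refine Finset.prod_congr rfl (fun v hv => ?_)
        rw [load_insert x hp, if_neg (Finset.ne_of_mem_erase hv).symm, add_zero]
    rw [h3, Finset.card_insert_of_notMem hp, Nat.descFactorial_succ, Nat.cast_mul]
    simp only [cylMass] at *
    rw [← mul_assoc, mul_comm (cyl bin x (insert p A) ⬝ᵥ 1), h2]
    linear_combination ((κ - load x A (x p) : ℕ) : ℝ) * ih

/-- From `(κ - i) / κ ≥ (a - i) / a` and `a! ≥ (a / e) ^ a`. -/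
lemma pow_le_descFactorial_mul_exp {κ a : ℕ} (ha : a ≤ κ) :
    (κ : ℝ) ^ a ≤ κ.descFactorial a * Real.exp 1 ^ a := by
  have h1 : κ ^ a * a.factorial ≤ κ.descFactorial a * a ^ a := by
    have e1 : κ ^ a * a.factorial = ∏ i ∈ Finset.range a, κ * (a - i) := by
      rw [Finset.prod_mul_distrib, Finset.prod_const, Finset.card_range,
        ← Nat.descFactorial_eq_prod_range, Nat.descFactorial_self]
    have e2 : κ.descFactorial a * a ^ a = ∏ i ∈ Finset.range a, (κ - i) * a := by
      rw [Finset.prod_mul_distrib, Finset.prod_const, Finset.card_range,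
        ← Nat.descFactorial_eq_prod_range]
    rw [e1, e2]
    refine Finset.prod_le_prod' (fun i _ => ?_)
    rw [Nat.mul_sub, Nat.sub_mul]
    exact Nat.sub_le_sub_left (by rw [mul_comm]; exact Nat.mul_le_mul_right i ha) _
  have h2 := Real.pow_div_factorial_le_exp (a : ℝ) (Nat.cast_nonneg a) a
  have h3 : (0 : ℝ) < a.factorial := by exact_mod_cast a.factorial_pos
  rw [div_le_iff₀ h3] at h2
  have h1' : (κ : ℝ) ^ a * a.factorial ≤ κ.descFactorial a * (a : ℝ) ^ a := by exact_mod_cast h1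
  rw [← Real.exp_nat_mul, mul_one]
  refine le_of_mul_le_mul_right (h1'.trans ?_) h3
  rw [mul_assoc]
  exact mul_le_mul_of_nonneg_left h2 (Nat.cast_nonneg _)

lemma sum_load (x : Pos → β) (A : Finset Pos) : ∑ v, load x A v = A.card :=
  (Finset.card_eq_sum_card_fiberwise (fun p _ => Finset.mem_coe.2 (Finset.mem_univ (x p)))).symm

/-- A cylinder over `k` positions compatible with the capacities has probability at
least `(e Q) ^ (-k)`. -/
lemma card_le_cylMass {bin : S → β} {κ : ℕ} (hκ : 0 < κ)
    (hbin : ∀ v, (Finset.univ.filter (fun s => bin s = v)).card = κ)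
    (hcard : Fintype.card Pos = κ * Fintype.card β)
    (x : Pos → β) (A : Finset Pos) (hx : ∀ v, load x A v ≤ κ) :
    (Fintype.card (Pos ≃ S) : ℝ)
      ≤ cylMass bin x A * (Real.exp 1 * Fintype.card β) ^ A.card := by
  have h1 := cylMass_eq hbin x A
  have h0 : 0 ≤ cylMass bin x A := by rw [← cyl_dot_self]; exact dot_self_nonneg _
  have h2 : (κ : ℝ) ^ A.card ≤ (∏ v, (κ.descFactorial (load x A v) : ℝ)) * Real.exp 1 ^ A.card := by
    rw [← sum_load x A, ← Finset.prod_pow_eq_pow_sum, ← Finset.prod_pow_eq_pow_sum,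
      ← Finset.prod_mul_distrib]
    exact Finset.prod_le_prod (fun v _ => by positivity)
      (fun v _ => pow_le_descFactorial_mul_exp (hx v))
  have h3 : ((Fintype.card Pos).descFactorial A.card : ℝ) ≤ ((κ : ℝ) * Fintype.card β) ^ A.card := by
    rw [← Nat.cast_mul, ← hcard]
    exact_mod_cast Nat.descFactorial_le_pow _ _
  have h4 : (0 : ℝ) < (κ : ℝ) ^ A.card := by positivity
  refine le_of_mul_le_mul_right ?_ h4
  calc (Fintype.card (Pos ≃ S) : ℝ) * (κ : ℝ) ^ A.card
      ≤ Fintype.card (Pos ≃ S) * ((∏ v, (κ.descFactorial (load x A v) : ℝ)) * Real.exp 1 ^ A.card) :=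
        mul_le_mul_of_nonneg_left h2 (Nat.cast_nonneg _)
    _ = cylMass bin x A * ((Fintype.card Pos).descFactorial A.card : ℕ) * Real.exp 1 ^ A.card := by
        rw [h1]; ring
    _ ≤ cylMass bin x A * ((κ : ℝ) * Fintype.card β) ^ A.card * Real.exp 1 ^ A.card := by
        gcongr
    _ = _ := by rw [mul_pow, mul_pow]; ring

lemma load_mono (x : Pos → β) {A B : Finset Pos} (h : A ⊆ B) (v : β) : load x A v ≤ load x B v :=
  Finset.card_le_card (Finset.filter_subset_filter _ h)

/-- Testing a full cylinder against a function of few positions. -/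
lemma cyl_dot_sq_le {bin : S → β} {κ : ℕ} (hκ : 0 < κ)
    (hbin : ∀ v, (Finset.univ.filter (fun s => bin s = v)).card = κ)
    (hcard : Fintype.card Pos = κ * Fintype.card β) (hS : Nonempty (Pos ≃ S))
    (x : Pos → β) {A Bl : Finset Pos} (hA : A ⊆ Bl) (hx : ∀ v, load x Bl v ≤ κ)
    {u : (Pos ≃ S) → ℝ} (hu : u ∈ depOn A) :
    (u ⬝ᵥ cyl bin x Bl) ^ 2 * Fintype.card (Pos ≃ S)
      ≤ cylMass bin x Bl ^ 2 * (Real.exp 1 * Fintype.card β) ^ A.card * (u ⬝ᵥ u) := by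
  have hM : (0 : ℝ) < Fintype.card (Pos ≃ S) := by exact_mod_cast Fintype.card_pos
  have h1 := card_le_cylMass hκ hbin hcard x A (fun v => (load_mono x hA v).trans (hx v))
  have h0 : 0 ≤ cylMass bin x A := by rw [← cyl_dot_self]; exact dot_self_nonneg _
  have hpos : 0 < cylMass bin x A := by
    rcases h0.eq_or_lt with h | h
    · rw [← h, zero_mul] at h1; linarith
    · exact h
  have h2 := cyl_union_dot hbin x A Bl hu
  rw [Finset.union_eq_right.2 hA, dotProduct_comm _ u] at h2
  have h3 := dot_sq_le (cyl bin x A) u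
  rw [cyl_dot_self] at h3
  set a := u ⬝ᵥ cyl bin x Bl
  set cA := cylMass bin x A
  set c := cylMass bin x Bl
  set b := cyl bin x A ⬝ᵥ u
  have h4 : a ^ 2 * cA ≤ c ^ 2 * (u ⬝ᵥ u) := by
    refine le_of_mul_le_mul_right ?_ hpos
    calc a ^ 2 * cA * cA = (a * cA) ^ 2 := by ring
      _ = c ^ 2 * b ^ 2 := by rw [h2]; ring
      _ ≤ c ^ 2 * (cA * (u ⬝ᵥ u)) := by gcongr
      _ = _ := by ring
  calc a ^ 2 * Fintype.card (Pos ≃ S)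
      ≤ a ^ 2 * (cA * (Real.exp 1 * Fintype.card β) ^ A.card) := by gcongr
    _ = a ^ 2 * cA * (Real.exp 1 * Fintype.card β) ^ A.card := by ring
    _ ≤ c ^ 2 * (u ⬝ᵥ u) * (Real.exp 1 * Fintype.card β) ^ A.card := by gcongr
    _ = _ := by ring

end Cylinders

/-! ### The mean-square bound -/

section Mixing

variable {Pos S β : Type*} [Fintype Pos] [DecidableEq Pos] [Fintype S] [DecidableEq S]
  [Fintype β] [DecidableEq β]

lemma pure_dot_eq_zero {u : Finset Pos → (Pos ≃ S) → ℝ} (hu : ∀ B, u B ∈ pureOn B)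
    {A B : Finset Pos} (h : A.card ≠ B.card) : u A ⬝ᵥ u B = 0 := by
  rcases lt_or_gt_of_ne h with h | h
  · rw [dotProduct_comm]; exact pureOn_orth (hu A).1 _ B (u B) rfl h (hu B)
  · exact pureOn_orth (hu B).1 _ A (u A) rfl h (hu A)

lemma level_dot_eq_zero {u : Finset Pos → (Pos ≃ S) → ℝ} (hu : ∀ B, u B ∈ pureOn B)
    (Bl : Finset Pos) {j k : ℕ} (h : j ≠ k) :
    (∑ A ∈ Bl.powersetCard j, u A) ⬝ᵥ (∑ A ∈ Bl.powersetCard k, u A) = 0 := by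
  rw [sum_dotProduct]
  refine Finset.sum_eq_zero (fun A hA => ?_)
  rw [dotProduct_sum]
  refine Finset.sum_eq_zero (fun B hB => pure_dot_eq_zero hu ?_)
  rw [(Finset.mem_powersetCard.1 hA).2, (Finset.mem_powersetCard.1 hB).2]
  exact h

lemma field_dot_sq_le {bin : S → β} {κ : ℕ} (hκ : 0 < κ)
    (hbin : ∀ v, (Finset.univ.filter (fun s => bin s = v)).card = κ)
    (hcard : Fintype.card Pos = κ * Fintype.card β) (hS : Nonempty (Pos ≃ S))
    (x : Pos → β) {Bl : Finset Pos} (hx : ∀ v, load x Bl v ≤ κ) (k : ℕ)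
    {v : Finset Pos → (Pos ≃ S) → ℝ} (hv : ∀ B, v B ∈ pureOn B) :
    ((∑ A ∈ Bl.powersetCard k, v A) ⬝ᵥ cyl bin x Bl) ^ 2 * Fintype.card (Pos ≃ S)
      ≤ cylMass bin x Bl ^ 2 * (Real.exp 1 * Fintype.card β) ^ k * (Bl.card.choose k)
        * fieldNorm Bl k v := by
  rw [sum_dotProduct]
  calc (∑ A ∈ Bl.powersetCard k, v A ⬝ᵥ cyl bin x Bl) ^ 2 * (Fintype.card (Pos ≃ S) : ℝ)
      ≤ ((Bl.powersetCard k).card * ∑ A ∈ Bl.powersetCard k, (v A ⬝ᵥ cyl bin x Bl) ^ 2)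
          * Fintype.card (Pos ≃ S) := by
        gcongr; exact sq_sum_le_card_mul_sum_sq
    _ = (Bl.card.choose k) * ∑ A ∈ Bl.powersetCard k,
          (v A ⬝ᵥ cyl bin x Bl) ^ 2 * Fintype.card (Pos ≃ S) := by
        rw [Finset.card_powersetCard, mul_assoc, Finset.sum_mul]
    _ ≤ (Bl.card.choose k) * ∑ A ∈ Bl.powersetCard k,
          cylMass bin x Bl ^ 2 * (Real.exp 1 * Fintype.card β) ^ k * (v A ⬝ᵥ v A) := by
        refine mul_le_mul_of_nonneg_left (Finset.sum_le_sum (fun A hA => ?_)) (Nat.cast_nonneg _)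
        obtain ⟨h1, h2⟩ := Finset.mem_powersetCard.1 hA
        have := cyl_dot_sq_le hκ hbin hcard hS x h1 hx (hv A).1
        rwa [h2] at this
    _ = _ := by rw [← Finset.mul_sum, fieldNorm]; ring

/-- Contribution of the degree-`k` part of the cylinder indicator `h` to `⟨gen ^ s h, h⟩`. -/
lemma level_bound {φ : Pos → Pos} (hφ : Function.Involutive φ) {Bl : Finset Pos}
    (hdis : ∀ p ∈ Bl, φ p ∉ Bl) (hBl : Bl.card ≤ Blᶜ.card)
    {bin : S → β} {κ : ℕ} (hκ : 0 < κ)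
    (hbin : ∀ v, (Finset.univ.filter (fun s => bin s = v)).card = κ)
    (hcard : Fintype.card Pos = κ * Fintype.card β) (hS : Nonempty (Pos ≃ S))
    (x : Pos → β) (hx : ∀ v, load x Bl v ≤ κ)
    {u : Finset Pos → (Pos ≃ S) → ℝ} (hu : ∀ B, u B ∈ pureOn B)
    (hdec : cyl bin x Bl = ∑ j ∈ Finset.range (Bl.card + 1), ∑ A ∈ Bl.powersetCard j, u A)
    {k : ℕ} (hk : k ≤ Bl.card) (s : ℕ) :
    (gen Bl ^ s) (∑ A ∈ Bl.powersetCard k, u A) ⬝ᵥ cyl bin x Bl * Fintype.card (Pos ≃ S)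
      ≤ rate Bl k ^ s * (2 ^ k *
        (cylMass bin x Bl ^ 2 * (Real.exp 1 * Fintype.card β) ^ k * (Bl.card.choose k))) := by
  have hM : (0 : ℝ) < Fintype.card (Pos ≃ S) := by exact_mod_cast Fintype.card_pos
  have hr : 0 ≤ rate Bl k := by
    have : (k : ℝ) ≤ Bl.card := by exact_mod_cast hk
    have : (0 : ℝ) ≤ Bl.card - k := by linarith
    rw [rate]; positivity
  have h1 := field_dot_sq_le hκ hbin hcard hS x hx k hu
  have h2 := field_dot_sq_le hκ hbin hcard hS x hx k (step_iter_pure Bl hu s)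
  have h3 := step_iter_norm_le hBl hk hu s
  have h4 := fieldNorm_le hφ hdis k hu
  rw [gen_pow_field Bl k s hu]
  set M : ℝ := (Fintype.card (Pos ≃ S) : ℝ)
  set Z := cylMass bin x Bl ^ 2 * (Real.exp 1 * Fintype.card β) ^ k * (Bl.card.choose k) with hZ
  have hZ0 : 0 ≤ Z := by positivity
  set w := ∑ A ∈ Bl.powersetCard k, u A with hw
  have h5 : w ⬝ᵥ cyl bin x Bl = w ⬝ᵥ w := by
    rw [hdec, dotProduct_sum]
    refine Finset.sum_eq_single_of_mem k (Finset.mem_range.2 (by omega)) (fun j _ hj => ?_)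
    exact level_dot_eq_zero hu Bl hj.symm
  rw [h5] at h1
  have hE := dot_self_nonneg w
  set E := w ⬝ᵥ w
  set F := fieldNorm Bl k u
  have h6 : E * M ≤ 2 ^ k * Z := by
    rcases hE.eq_or_lt with h | h
    · rw [← h, zero_mul]; positivity
    · refine le_of_mul_le_mul_right ?_ h
      calc E * M * E = E ^ 2 * M := by ring
        _ ≤ Z * F := h1
        _ ≤ Z * (2 ^ k * E) := by gcongr
        _ = _ := by ring
  have h7 : F * M ≤ 2 ^ k * (2 ^ k * Z) := by
    calc F * M ≤ 2 ^ k * E * M := by gcongr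
      _ = 2 ^ k * (E * M) := by ring
      _ ≤ _ := by gcongr
  set G := (∑ A ∈ Bl.powersetCard k, ((step Bl)^[s] u) A) ⬝ᵥ cyl bin x Bl
  have h8 : (G * M) ^ 2 ≤ (rate Bl k ^ s * (2 ^ k * Z)) ^ 2 := by
    calc (G * M) ^ 2 = G ^ 2 * M * M := by ring
      _ ≤ Z * fieldNorm Bl k ((step Bl)^[s] u) * M := by gcongr
      _ ≤ Z * ((rate Bl k ^ s) ^ 2 * F) * M := by gcongr
      _ = Z * (rate Bl k ^ s) ^ 2 * (F * M) := by ring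
      _ ≤ Z * (rate Bl k ^ s) ^ 2 * (2 ^ k * (2 ^ k * Z)) := by gcongr
      _ = _ := by ring
  exact (abs_le_of_sq_le_sq' h8 (by positivity)).2

/-- Distance in mean square between `gen ^ t` applied to a cylinder indicator and its mean. -/
lemma l2_bound {φ : Pos → Pos} (hφ : Function.Involutive φ) {Bl : Finset Pos}
    (hdis : ∀ p ∈ Bl, φ p ∉ Bl) (hBl : Bl.card ≤ Blᶜ.card)
    {bin : S → β} {κ : ℕ} (hκ : 0 < κ)
    (hbin : ∀ v, (Finset.univ.filter (fun s => bin s = v)).card = κ)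
    (hcard : Fintype.card Pos = κ * Fintype.card β) (hS : Nonempty (Pos ≃ S))
    (x : Pos → β) (hx : ∀ v, load x Bl v ≤ κ) (t : ℕ)
    {D : (Pos ≃ S) → ℝ} (hD : D = (gen Bl ^ t) (cyl bin x Bl)
      - (rate Bl 0 ^ t * (cylMass bin x Bl / Fintype.card (Pos ≃ S))) • 1) :
    (D ⬝ᵥ D) * Fintype.card (Pos ≃ S)
      ≤ ∑ k ∈ Finset.Icc 1 Bl.card, rate Bl k ^ (2 * t) * (2 ^ k *
        (cylMass bin x Bl ^ 2 * (Real.exp 1 * Fintype.card β) ^ k * (Bl.card.choose k))) := by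
  have hM : (0 : ℝ) < Fintype.card (Pos ≃ S) := by exact_mod_cast Fintype.card_pos
  obtain ⟨u, hu, hdec⟩ := exists_pure_decomp Bl (cyl_mem_depOn bin x Bl)
  rw [Finset.sum_powerset] at hdec
  set w : ℕ → (Pos ≃ S) → ℝ := fun k => ∑ A ∈ Bl.powersetCard k, u A with hw
  have hdec' : cyl bin x Bl = w 0 + ∑ k ∈ Finset.Icc 1 Bl.card, w k := by
    rw [hdec, Finset.range_eq_Ico, Finset.sum_eq_sum_Ico_succ_bot (by omega)]
    rfl
  set r := ∑ k ∈ Finset.Icc 1 Bl.card, w k with hr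
  have hw0 : w 0 = u ∅ := by simp [hw]
  have hconst : u ∅ = (cylMass bin x Bl / Fintype.card (Pos ≃ S)) • 1 := by
    obtain ⟨η₀⟩ := hS
    have h1 : u ∅ = u ∅ η₀ • 1 := by
      ext η
      have := congrFun (depOn_inv (hu ∅).1 (g := η.trans η₀.symm) (by simp)) η₀
      rw [act_apply] at this
      simp only [Pi.smul_apply, Pi.one_apply, smul_eq_mul, mul_one]
      rw [← this]
      congr 1
      ext p; simp
    have h2 : cylMass bin x Bl = u ∅ η₀ * Fintype.card (Pos ≃ S) := by
      have h3 : r ⬝ᵥ 1 = 0 := by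
        rw [hr, sum_dotProduct]
        refine Finset.sum_eq_zero (fun k hk => ?_)
        rw [hw, sum_dotProduct]
        refine Finset.sum_eq_zero (fun A hA => ?_)
        refine pureOn_orth (one_mem_depOn (S := S) ∅) _ A (u A) rfl ?_ (hu A)
        rw [(Finset.mem_powersetCard.1 hA).2, Finset.card_empty]
        exact (Finset.mem_Icc.1 hk).1
      rw [cylMass, hdec', add_dotProduct, h3, add_zero, hw0, h1]
      simp [dotProduct, mul_comm]
    rw [h2, mul_div_cancel_right₀ _ hM.ne', ← h1]
  have hgen0 : ∀ s : ℕ, (gen Bl ^ s) (w 0) = rate Bl 0 ^ s • w 0 := by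
    intro s
    induction s with
    | zero => simp
    | succ s ih =>
      have : gen Bl (w 0) = rate Bl 0 • w 0 := by
        rw [hw0, gen_pure (Finset.empty_subset Bl) (hu ∅)]; simp
      rw [pow_succ', Module.End.mul_apply, ih, map_smul, this, smul_smul, pow_succ]
  have hD' : D = (gen Bl ^ t) r := by
    rw [hD, hdec', map_add, hgen0, hw0, hconst, smul_smul]; abel
  have hr0 : r ⬝ᵥ w 0 = 0 := by
    rw [hr, sum_dotProduct]
    refine Finset.sum_eq_zero (fun k hk => level_dot_eq_zero hu Bl ?_)
    have := (Finset.mem_Icc.1 hk).1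
    omega
  have hDD : D ⬝ᵥ D = ∑ k ∈ Finset.Icc 1 Bl.card, (gen Bl ^ (2 * t)) (w k) ⬝ᵥ cyl bin x Bl := by
    have h1 : (gen Bl ^ (2 * t)) r ⬝ᵥ w 0 = 0 := by
      rw [gen_pow_dot, hgen0, dotProduct_smul, hr0, smul_zero]
    rw [← sum_dotProduct, ← map_sum, ← hr, hdec', dotProduct_add, h1, zero_add, hD',
      ← gen_pow_dot, two_mul, pow_add, Module.End.mul_apply]
  rw [hDD, Finset.sum_mul]
  exact Finset.sum_le_sum (fun k hk => level_bound hφ hdis hBl hκ hbin hcard hS x hx hu hdec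
    (Finset.mem_Icc.1 hk).2 _)

end Mixing

/-! ### Projection to the congestion dynamics -/

section Chain

variable {Q κ n m : ℕ}

/-- The positions occupied by the players, among `n` player positions and `m` vacant ones. -/
def players (n m : ℕ) : Finset (Fin n ⊕ Fin m) := Finset.univ.map ⟨Sum.inl, Sum.inl_injective⟩

lemma inl_mem_players (i : Fin n) : (Sum.inl i : Fin n ⊕ Fin m) ∈ players n m := by simp [players]

lemma inr_notMem_players (d : Fin m) : (Sum.inr d : Fin n ⊕ Fin m) ∉ players n m := by
  simp [players]

lemma card_players : (players n m).card = n := by simp [players]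

lemma card_players_compl : (players n m)ᶜ.card = m := by
  rw [Finset.card_compl, card_players]; simp

/-- The involution pairing the `i`-th player position with the `i`-th vacant position. -/
def partner (h : n ≤ m) : Fin n ⊕ Fin m → Fin n ⊕ Fin m
  | Sum.inl i => Sum.inr (Fin.castLE h i)
  | Sum.inr j => if hj : j.val < n then Sum.inl ⟨j.val, hj⟩ else Sum.inr j

lemma partner_involutive (h : n ≤ m) : Function.Involutive (partner h) := by
  rintro (i | j)
  · simp [partner]
  · by_cases hj : j.val < n
    · simp [partner, hj]
    · simp [partner, hj]

lemma partner_notMem (h : n ≤ m) : ∀ p ∈ players n m, partner h p ∉ players n m := by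
  rintro (i | j) hp
  · exact inr_notMem_players _
  · exact absurd hp (inr_notMem_players j)

lemma card_bin (v : Fin Q) :
    (Finset.univ.filter (fun s : Fin Q × Fin κ => s.1 = v)).card = κ := by
  have : Finset.univ.filter (fun s : Fin Q × Fin κ => s.1 = v)
      = Finset.univ.map ⟨fun a : Fin κ => (v, a), fun a b h => (Prod.ext_iff.1 h).2⟩ := by
    ext ⟨w, a⟩
    rw [Finset.mem_filter, Finset.mem_map]
    constructor
    · rintro ⟨_, rfl⟩
      exact ⟨a, Finset.mem_univ _, rfl⟩
    · rintro ⟨b, _, hb⟩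
      exact ⟨Finset.mem_univ _, (Prod.ext_iff.1 hb).1.symm⟩
  rw [this, Finset.card_map]; simp

/-- Extension of a configuration of the players to all positions, with a dummy value at the vacant
positions. -/
def extend (v₀ : Fin Q) (y : Fin n → Fin Q) : Fin n ⊕ Fin m → Fin Q := Sum.elim y (fun _ => v₀)

lemma load_extend (v₀ : Fin Q) (y : Fin n → Fin Q) (v : Fin Q) :
    load (extend v₀ y) (players n m) v = xiCount y v := by
  rw [load, xiCount, players, Finset.filter_map, Finset.card_map]
  rfl

/-- The configuration of the players read off from a placement of all positions into
the `κ` slots of each of the `Q` resources. -/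
def project (η : (Fin n ⊕ Fin m) ≃ (Fin Q × Fin κ)) : ConfigState Q κ n :=
  ⟨fun i => (η (Sum.inl i)).1, fun v => by
    have h1 := card_fiber (Pos := Fin n ⊕ Fin m) (card_bin (κ := κ)) η v
    refine le_trans ?_ h1.le
    rw [xiCount]
    refine Finset.card_le_card_of_injOn Sum.inl ?_ (fun a _ b _ h => Sum.inl_injective h)
    intro i hi
    simpa using hi⟩

/-- Indicator of the placements that induce the configuration `y`. -/
def ind (m : ℕ) (v₀ : Fin Q) (y : ConfigState Q κ n) : ((Fin n ⊕ Fin m) ≃ (Fin Q × Fin κ)) → ℝ :=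
  cyl Prod.fst (extend v₀ y.1) (players n m)

lemma ind_apply (v₀ : Fin Q) (y : ConfigState Q κ n) (η : (Fin n ⊕ Fin m) ≃ (Fin Q × Fin κ)) :
    ind m v₀ y η = if project η = y then 1 else 0 := by
  rw [ind, cyl]
  refine if_congr ?_ rfl rfl
  rw [Subtype.ext_iff, funext_iff]
  constructor
  · intro h i; exact h (Sum.inl i) (inl_mem_players i)
  · rintro h (i | j) hp
    · exact h i
    · exact absurd hp (inr_notMem_players j)

lemma ind_dot_ind (v₀ : Fin Q) (x y : ConfigState Q κ n) :
    ind m v₀ x ⬝ᵥ ind m v₀ y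
      = (if y = x then 1 else 0) * cylMass (S := Fin Q × Fin κ) Prod.fst (extend (m := m) v₀ x.1) (players n m) := by
  split_ifs with h
  · subst h; rw [one_mul, ← cyl_dot_self]; rfl
  · rw [zero_mul]
    refine Finset.sum_eq_zero (fun η _ => ?_)
    rw [ind_apply, ind_apply]
    split_ifs with h1 h2
    · exact absurd (h2.symm.trans h1) h
    all_goals simp

lemma rate_zero : rate (players n m) 0 = (n : ℝ) * (m + 1) := by
  simp [rate, card_players, card_players_compl]

lemma gen_ind_apply (v₀ : Fin Q) (y : ConfigState Q κ n)
    (η : (Fin n ⊕ Fin m) ≃ (Fin Q × Fin κ)) :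
    gen (players n m) (ind m v₀ y) η
      = ∑ i : Fin n, if ∀ j, j ≠ i → (project η).1 j = y.1 j then
          ((κ - (Finset.univ.filter (fun j => j ≠ i ∧ (project η).1 j = y.1 i)).card : ℕ) : ℝ)
          else 0 := by
  rw [gen_eq]
  conv_lhs => rw [players]
  rw [Finset.sum_map, Finset.sum_apply, ← players]
  refine Finset.sum_congr rfl (fun i _ => ?_)
  simp only [Function.Embedding.coeFn_mk]
  set p : Fin n ⊕ Fin m := Sum.inl i with hp
  have hpB : p ∈ players n m := inl_mem_players i
  have hcompl : ((players n m).erase p)ᶜ = insert p (players n m)ᶜ := by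
    rw [Finset.compl_erase]
  have h1 := sum_act_swap_cyl (card_bin (Q := Q) (κ := κ)) (extend v₀ y.1)
    (Finset.notMem_erase p (players n m))
  rw [Finset.insert_erase hpB, hcompl, Finset.sum_insert (by simp [hpB]), Equiv.swap_self] at h1
  have h2 : ind m v₀ y + ∑ d ∈ (players n m)ᶜ, act (Equiv.swap p d) (ind m v₀ y)
      = ((κ - load (extend v₀ y.1) ((players n m).erase p) (extend v₀ y.1 p) : ℕ) : ℝ) •
        cyl Prod.fst (extend v₀ y.1) ((players n m).erase p) := h1
  rw [h2, Pi.smul_apply, smul_eq_mul, cyl]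
  have h3 : (∀ q ∈ (players n m).erase p, (η q).1 = extend v₀ y.1 q)
      ↔ ∀ j, j ≠ i → (project η).1 j = y.1 j := by
    constructor
    · intro h j hj
      exact h (Sum.inl j) (Finset.mem_erase.2 ⟨by simpa [hp] using hj, inl_mem_players j⟩)
    · rintro h (j | j) hq
      · exact h j (by simpa [hp] using (Finset.mem_erase.1 hq).1)
      · exact absurd (Finset.mem_erase.1 hq).2 (inr_notMem_players j)
  by_cases h : ∀ j, j ≠ i → (project η).1 j = y.1 j
  · rw [if_pos (h3.2 h), if_pos h, mul_one]
    have : load (extend (m := m) v₀ y.1) ((players n m).erase p) (extend v₀ y.1 p)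
        = (Finset.univ.filter (fun j => j ≠ i ∧ (project η).1 j = y.1 i)).card := by
      rw [load]
      symm
      refine Finset.card_bij (fun j _ => Sum.inl j) ?_ ?_ ?_
      · intro j hj
        simp only [Finset.mem_filter, Finset.mem_univ, true_and] at hj
        refine Finset.mem_filter.2 ⟨Finset.mem_erase.2 ⟨by simpa [hp] using hj.1, inl_mem_players j⟩, ?_⟩
        exact (h j hj.1).symm.trans hj.2
      · intro a _ b _ hab; exact Sum.inl_injective hab
      · rintro (j | j) hq
        · obtain ⟨hq1, hq2⟩ := Finset.mem_filter.1 hq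
          have hj : j ≠ i := by simpa [hp] using (Finset.mem_erase.1 hq1).1
          exact ⟨j, Finset.mem_filter.2 ⟨Finset.mem_univ _, hj, (h j hj).trans hq2⟩, rfl⟩
        · exact absurd (Finset.mem_erase.1 (Finset.mem_filter.1 hq).1).2 (inr_notMem_players j)
    rw [this]
  · rw [if_neg (fun h' => h (h3.1 h')), if_neg h, mul_zero]

/-- The generator on placements projects to the congestion dynamics. -/
lemma gen_ind (hm : n + m = κ * Q) (hn : 0 < n) (v₀ : Fin Q) (y : ConfigState Q κ n)
    (η : (Fin n ⊕ Fin m) ≃ (Fin Q × Fin κ)) :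
    gen (players n m) (ind m v₀ y) η
      = rate (players n m) 0 * configP Q κ n (project η) y := by
  have hden : (n : ℝ) * ((1 + κ * Q - n : ℕ) : ℝ) = rate (players n m) 0 := by
    rw [rate_zero, show 1 + κ * Q - n = m + 1 by omega]; push_cast; rfl
  have hT : rate (players n m) 0 ≠ 0 := by
    rw [rate_zero]; have : (0 : ℝ) < n := by exact_mod_cast hn
    positivity
  rw [gen_ind_apply, configP, hden]
  generalize project η = z
  split_ifs with h
  · subst h
    rw [mul_div_cancel₀ _ hT]
    refine Finset.sum_congr rfl (fun i _ => ?_)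
    rw [if_pos (fun _ _ => rfl)]
    have : xiCount y.1 (y.1 i)
        = (Finset.univ.filter (fun j => j ≠ i ∧ y.1 j = y.1 i)).card + 1 := by
      rw [xiCount, ← Finset.card_insert_of_notMem (a := i) (by simp)]
      congr 1
      ext j
      by_cases hj : j = i <;> simp [hj]
    rw [this]
    congr 1
    omega
  · rw [mul_div_cancel₀ _ hT]
    refine Finset.sum_congr rfl (fun i _ => ?_)
    have hiff : (∀ j, j ≠ i → z.1 j = y.1 j) ↔ (y.1 i ≠ z.1 i ∧ ∀ j, j ≠ i → y.1 j = z.1 j) := by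
      constructor
      · intro h'
        refine ⟨fun h'' => h (Subtype.ext (funext (fun j => ?_))), fun j hj => (h' j hj).symm⟩
        by_cases hj : j = i
        · rw [hj, h'']
        · exact (h' j hj).symm
      · rintro ⟨_, h'⟩ j hj; exact (h' j hj).symm
    by_cases h' : ∀ j, j ≠ i → z.1 j = y.1 j
    · rw [if_pos h', if_pos (hiff.1 h')]
      congr 2
      rw [xiCount]
      congr 1
      ext j
      simp only [Finset.mem_filter, Finset.mem_univ, true_and, and_iff_right_iff_imp]
      rintro h1 rfl
      exact (hiff.1 h').1 h1.symm
    · rw [if_neg h', if_neg (fun h2 => h' (hiff.2 h2))]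

lemma evolve_eq (hm : n + m = κ * Q) (hn : 0 < n) (v₀ : Fin Q) (x y : ConfigState Q κ n) (t : ℕ) :
    evolve (configP Q κ n) (delta x) t y
        * (rate (players n m) 0 ^ t * cylMass (S := Fin Q × Fin κ) Prod.fst (extend (m := m) v₀ x.1) (players n m))
      = (gen (players n m) ^ t) (ind m v₀ x) ⬝ᵥ ind m v₀ y := by
  induction t generalizing y with
  | zero =>
    rw [pow_zero, one_mul, pow_zero, Module.End.one_apply, ind_dot_ind]
    simp [evolve, delta]
  | succ t ih =>
    have h1 : gen (players n m) (ind m v₀ y)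
        = ∑ z, (rate (players n m) 0 * configP Q κ n z y) • ind m v₀ z := by
      ext η
      rw [gen_ind hm hn, Finset.sum_apply, Finset.sum_eq_single (project η)]
      · rw [Pi.smul_apply, ind_apply, if_pos rfl, smul_eq_mul, mul_one]
      · intro z _ hz
        rw [Pi.smul_apply, ind_apply, if_neg hz.symm, smul_zero]
      · simp
    rw [pow_succ', pow_succ' (gen (players n m)), Module.End.mul_apply, gen_dot, h1, dotProduct_sum]
    simp only [evolve, Finset.sum_mul]
    refine Finset.sum_congr rfl (fun z _ => ?_)
    rw [dotProduct_smul, ← ih, smul_eq_mul]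
    ring

lemma exp_neg_potF (y : ConfigState Q κ n) :
    Real.exp (-(potF Q κ n y)) * ((κ : ℝ) + 1) ^ n
      = ∏ v, (κ.descFactorial (xiCount y.1 v) : ℝ) := by
  have hsum : ∑ v, xiCount y.1 v = n := by
    have := sum_load (β := Fin Q) y.1 Finset.univ
    simpa [load, xiCount] using this
  have hk : (0 : ℝ) < (κ : ℝ) + 1 := by positivity
  have key : ∀ a ≤ κ, Real.exp (-(∑ s ∈ Finset.range (a + 1),
      (Real.log ((κ : ℝ) + 1) - Real.log ((κ : ℝ) + 1 - (s : ℝ))))) * ((κ : ℝ) + 1) ^ a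
      = κ.descFactorial a := by
    intro a
    induction a with
    | zero => intro _; simp
    | succ a ih =>
      intro ha
      have h1 : (0 : ℝ) < (κ : ℝ) + 1 - ((a + 1 : ℕ) : ℝ) := by
        have : ((a + 1 : ℕ) : ℝ) ≤ κ := by exact_mod_cast ha
        linarith
      rw [Finset.sum_range_succ, neg_add, Real.exp_add, neg_sub, Real.exp_sub, Real.exp_log hk,
        Real.exp_log h1, Nat.descFactorial_succ, Nat.cast_mul, ← ih (by omega),
        Nat.cast_sub (by omega)]
      field_simp
      push_cast
      ring
  have hpow : ((κ : ℝ) + 1) ^ n = ∏ v, ((κ : ℝ) + 1) ^ xiCount y.1 v := by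
    rw [Finset.prod_pow_eq_pow_sum, hsum]
  rw [potF, ← Finset.sum_neg_distrib, Real.exp_sum, hpow, ← Finset.prod_mul_distrib]
  exact Finset.prod_congr rfl (fun v _ => key _ (y.2 v))

lemma sum_cylMass (v₀ : Fin Q) :
    ∑ y : ConfigState Q κ n, cylMass (S := Fin Q × Fin κ) Prod.fst (extend (m := m) v₀ y.1) (players n m)
      = Fintype.card ((Fin n ⊕ Fin m) ≃ (Fin Q × Fin κ)) := by
  simp only [cylMass, dotProduct]
  rw [Finset.sum_comm, Fintype.card_eq_sum_ones, Nat.cast_sum]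
  refine Finset.sum_congr rfl (fun η _ => ?_)
  have : ∀ y : ConfigState Q κ n, cyl Prod.fst (extend (m := m) v₀ y.1) (players n m) η
      = if project η = y then 1 else 0 := fun y => ind_apply v₀ y η
  simp [this]

/-- The Gibbs measure is the image of the uniform measure on placements. -/
lemma gibbs_eq (hm : n + m = κ * Q) (v₀ : Fin Q) (y : ConfigState Q κ n) :
    gibbs Q κ n y = cylMass (S := Fin Q × Fin κ) Prod.fst (extend (m := m) v₀ y.1) (players n m)
      / Fintype.card ((Fin n ⊕ Fin m) ≃ (Fin Q × Fin κ)) := by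
  have hS : Nonempty ((Fin n ⊕ Fin m) ≃ (Fin Q × Fin κ)) :=
    ⟨Fintype.equivOfCardEq (by simp [hm, mul_comm])⟩
  have hM : (0 : ℝ) < Fintype.card ((Fin n ⊕ Fin m) ≃ (Fin Q × Fin κ)) := by
    exact_mod_cast Fintype.card_pos
  set M : ℝ := ((Fintype.card ((Fin n ⊕ Fin m) ≃ (Fin Q × Fin κ)) : ℕ) : ℝ) with hMdef
  obtain ⟨K, hK, hKe⟩ : ∃ K : ℝ, 0 < K ∧ ∀ y : ConfigState Q κ n, Real.exp (-(potF Q κ n y))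
      = cylMass (S := Fin Q × Fin κ) Prod.fst (extend (m := m) v₀ y.1) (players n m) * K := by
    refine ⟨((n + m).descFactorial n : ℝ) / (M * ((κ : ℝ) + 1) ^ n), ?_, fun y => ?_⟩
    · have : 0 < (n + m).descFactorial n := Nat.descFactorial_pos.2 (by omega)
      positivity
    · have h1 := exp_neg_potF y
      have h2 := cylMass_eq (card_bin (Q := Q) (κ := κ)) (extend (m := m) v₀ y.1) (players n m)
      simp only [load_extend, card_players, Fintype.card_sum, Fintype.card_fin] at h2
      rw [← h1, ← hMdef] at h2
      rw [← mul_div_assoc, eq_div_iff (by positivity), h2]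
      ring
  rw [gibbs, Finset.sum_congr rfl (fun ta _ => hKe ta), ← Finset.sum_mul, sum_cylMass, hKe,
    mul_div_mul_right _ _ hK.ne']

/-- Non-asymptotic bound on the distance to equilibrium. -/
lemma event_bound (hm : n + m = κ * Q) (hn : 0 < n) (hnm : n ≤ m)
    (x : ConfigState Q κ n) (t : ℕ) (A : Finset (ConfigState Q κ n)) :
    (∑ y ∈ A, (evolve (configP Q κ n) (delta x) t y - gibbs Q κ n y)) ^ 2
      ≤ ∑ k ∈ Finset.Icc 1 n, (rate (players n m) k / rate (players n m) 0) ^ (2 * t)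
          * ((2 * (Real.exp 1 * Q)) ^ k * (n.choose k)) := by
  have hκQ : 0 < κ * Q := by omega
  have hκ : 0 < κ := Nat.pos_of_mul_pos_right hκQ
  have hQ : 0 < Q := Nat.pos_of_mul_pos_left hκQ
  have v₀ : Fin Q := ⟨0, hQ⟩
  have hS : Nonempty ((Fin n ⊕ Fin m) ≃ (Fin Q × Fin κ)) :=
    ⟨Fintype.equivOfCardEq (by simp [hm, mul_comm])⟩
  have hM : (0 : ℝ) < Fintype.card ((Fin n ⊕ Fin m) ≃ (Fin Q × Fin κ)) := by
    exact_mod_cast Fintype.card_pos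
  have hcard : Fintype.card (Fin n ⊕ Fin m) = κ * Fintype.card (Fin Q) := by simp [hm]
  have hT : 0 < rate (players n m) 0 := by
    rw [rate_zero]; have : (0 : ℝ) < n := by exact_mod_cast hn
    positivity
  have hx : ∀ v, load (extend (m := m) v₀ x.1) (players n m) v ≤ κ := by
    intro v; rw [load_extend]; exact x.2 v
  have hc : 0 < cylMass (S := Fin Q × Fin κ) Prod.fst (extend (m := m) v₀ x.1) (players n m) := by
    have h1 := card_le_cylMass hκ (card_bin (Q := Q) (κ := κ)) hcard (extend v₀ x.1)
      (players n m) hx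
    by_contra h
    have h2 : (0 : ℝ) ≤ (Real.exp 1 * Fintype.card (Fin Q)) ^ (players n m).card := by positivity
    nlinarith [not_lt.1 h]
  have hl2 := l2_bound (partner_involutive hnm) (partner_notMem hnm)
    (by rw [card_players, card_players_compl]; exact hnm) hκ (card_bin (Q := Q) (κ := κ)) hcard hS
    (extend v₀ x.1) hx t rfl
  rw [card_players, Fintype.card_fin] at hl2
  set M : ℝ := ((Fintype.card ((Fin n ⊕ Fin m) ≃ (Fin Q × Fin κ)) : ℕ) : ℝ) with hMdef
  set c := cylMass (S := Fin Q × Fin κ) Prod.fst (extend (m := m) v₀ x.1) (players n m) with hcdef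
  set D := (gen (players n m) ^ t) (cyl Prod.fst (extend v₀ x.1) (players n m))
    - (rate (players n m) 0 ^ t * (c / M)) • (1 : ((Fin n ⊕ Fin m) ≃ (Fin Q × Fin κ)) → ℝ) with hD
  set T := rate (players n m) 0 with hTdef
  set I : ((Fin n ⊕ Fin m) ≃ (Fin Q × Fin κ)) → ℝ := ∑ y ∈ A, ind m v₀ y with hI
  have hII : I ⬝ᵥ I ≤ M := by
    rw [hMdef, Fintype.card_eq_sum_ones, Nat.cast_sum]
    refine Finset.sum_le_sum (fun η _ => ?_)
    have : I η = if project η ∈ A then 1 else 0 := by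
      rw [hI, Finset.sum_apply]
      simp [ind_apply]
    rw [this]
    split_ifs <;> simp
  have hDI : (∑ y ∈ A, (evolve (configP Q κ n) (delta x) t y - gibbs Q κ n y)) * (T ^ t * c)
      = D ⬝ᵥ I := by
    rw [hI, dotProduct_sum, Finset.sum_mul]
    refine Finset.sum_congr rfl (fun y _ => ?_)
    rw [sub_mul, evolve_eq hm hn v₀, hD, sub_dotProduct, gibbs_eq hm v₀, smul_dotProduct,
      dotProduct_comm 1 (ind m v₀ y), smul_eq_mul]
    simp only [ind, cylMass]
    ring
  have hsq := dot_sq_le D I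
  have h0 : 0 ≤ D ⬝ᵥ D := dot_self_nonneg D
  rw [← hDI] at hsq
  have hfin := hsq.trans ((mul_le_mul_of_nonneg_left hII h0).trans hl2)
  have hpos : 0 < (T ^ t * c) ^ 2 := by positivity
  rw [mul_pow] at hfin
  refine le_of_mul_le_mul_right (hfin.trans (le_of_eq ?_)) hpos
  rw [Finset.sum_mul]
  refine Finset.sum_congr rfl (fun k _ => ?_)
  rw [div_pow, mul_pow 2 (Real.exp 1 * Q) k]
  field_simp
  ring

end Chain

/-! ### Asymptotics -/

section Asymptotics

variable {Q κ n m : ℕ}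

/-- Each degree contracts at least exponentially per step, at a rate proportional to the degree. -/
lemma rate_ratio (hn : 0 < n) {k : ℕ} (hk : k ≤ n) :
    0 ≤ rate (players n m) k / rate (players n m) 0 ∧
      rate (players n m) k / rate (players n m) 0
        ≤ Real.exp (-((k : ℝ) * ((m : ℝ) / (n * (m + 1))))) := by
  have hn' : (0 : ℝ) < n := by exact_mod_cast hn
  have hk' : (k : ℝ) ≤ n := by exact_mod_cast hk
  have hk0 : (0 : ℝ) ≤ k := by positivity
  have hm0 : (0 : ℝ) ≤ m := by positivity
  have heq : rate (players n m) k = ((n : ℝ) - k) * (m + 1) + k := by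
    simp [rate, card_players, card_players_compl]
  have h0 : 0 ≤ rate (players n m) k := by
    rw [heq]; have : (0 : ℝ) ≤ n - k := by linarith
    positivity
  constructor
  · rw [rate_zero]; positivity
  · refine le_trans (le_of_eq ?_) (Real.add_one_le_exp _)
    rw [rate_zero, heq]
    field_simp
    ring

/-- The binomial theorem turns the sum over degrees into `(1 + c e ^ (-2 t θ)) ^ n - 1`. -/
lemma sum_bound (hn : 0 < n) (t : ℕ) {θ c : ℝ} (hθ : θ = (m : ℝ) / (n * (m + 1))) (hc : 0 ≤ c) :
    ∑ k ∈ Finset.Icc 1 n, (rate (players n m) k / rate (players n m) 0) ^ (2 * t)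
          * (c ^ k * (n.choose k))
      ≤ Real.exp (c * (n * Real.exp (-(2 * t * θ)))) - 1 := by
  set z := c * Real.exp (-(2 * t * θ)) with hz
  have hz0 : 0 ≤ z := by positivity
  have h1 : ∀ k ∈ Finset.Icc 1 n, (rate (players n m) k / rate (players n m) 0) ^ (2 * t)
          * (c ^ k * (n.choose k)) ≤ z ^ k * (n.choose k) := by
    intro k hk
    obtain ⟨ha, hb⟩ := rate_ratio (m := m) hn (Finset.mem_Icc.1 hk).2
    have h2 : (rate (players n m) k / rate (players n m) 0) ^ (2 * t)
        ≤ Real.exp (-(2 * t * θ)) ^ k := by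
      refine (pow_le_pow_left₀ ha hb _).trans (le_of_eq ?_)
      rw [← Real.exp_nat_mul, ← Real.exp_nat_mul, hθ]
      congr 1
      push_cast
      ring
    rw [hz, mul_pow, ← mul_assoc, mul_comm (c ^ k)]
    gcongr
  have h2 : ∑ k ∈ Finset.Icc 1 n, z ^ k * (n.choose k : ℝ) = (z + 1) ^ n - 1 := by
    rw [add_pow, Finset.sum_range_eq_add_Ico _ (by omega)]
    simp only [one_pow, mul_one, pow_zero, Nat.choose_zero_right, Nat.cast_one, add_sub_cancel_left]
    rfl
  refine (Finset.sum_le_sum h1).trans (h2.le.trans ?_)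
  have h3 : (z + 1) ^ n ≤ Real.exp (n * z) := by
    rw [Real.exp_nat_mul]
    exact pow_le_pow_left₀ (by positivity) (Real.add_one_le_exp z) n
  have h4 : (n : ℝ) * z = c * (n * Real.exp (-(2 * t * θ))) := by rw [hz]; ring
  rw [h4] at h3
  linarith

/-- At time `(n log n)/2 + α n` the quantity `n e^{-2tθ}`, which governs the sum over degrees, is
bounded uniformly in `n`. -/
lemma remaining_le (hn : 0 < n) (hnm : n ≤ m) {t : ℕ} {α θ : ℝ} (hα : 0 ≤ α)
    (hθ : θ = (m : ℝ) / (n * (m + 1)))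
    (ht : (1 / 2) * (n : ℝ) * Real.log n + α * n ≤ t) :
    (n : ℝ) * Real.exp (-(2 * t * θ)) ≤ Real.exp (1 - α) := by
  have hn' : (0 : ℝ) < n := by exact_mod_cast hn
  have hn1 : (1 : ℝ) ≤ n := by exact_mod_cast hn
  have hnm' : (n : ℝ) ≤ m := by exact_mod_cast hnm
  have hθ0 : 0 ≤ θ := by rw [hθ]; positivity
  have hlog : Real.log n ≤ m := (Real.log_le_sub_one_of_pos hn').trans (by linarith)
  have h1 : 2 * ((1 / 2) * (n : ℝ) * Real.log n + α * n) * θ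
      = (Real.log n + 2 * α) * (m / (m + 1)) := by
    rw [hθ]; field_simp
  have h2 : Real.log n - 1 + α ≤ (Real.log n + 2 * α) * (m / (m + 1)) := by
    rw [← mul_div_assoc, le_div_iff₀ (by positivity)]
    nlinarith
  have h3 : Real.log n - 1 + α ≤ 2 * t * θ := by
    refine h2.trans (h1.symm.le.trans ?_)
    gcongr
  calc (n : ℝ) * Real.exp (-(2 * t * θ)) = Real.exp (Real.log n + -(2 * t * θ)) := by
        rw [Real.exp_add, Real.exp_log hn']
    _ ≤ Real.exp (1 - α) := Real.exp_le_exp.2 (by linarith)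

lemma DTV_nonneg {X : Type*} [Fintype X] (p : X → X → ℝ) (pi : X → ℝ) (t : ℕ) :
    0 ≤ DTV p pi t :=
  Real.iSup_nonneg (fun _ => Real.iSup_nonneg (fun _ => abs_nonneg _))

/-- The bound on the distance to equilibrium at time `(n log n)/2 + α n`. -/
def tvBound (Q : ℕ) (α : ℝ) : ℝ :=
  Real.sqrt (Real.exp (2 * (Real.exp 1 * Q) * Real.exp (1 - α)) - 1)

lemma DTV_le (hm : 2 * n ≤ κ * Q) (hn : 0 < n) {t : ℕ} {α : ℝ} (hα : 0 ≤ α)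
    (ht : (1 / 2) * (n : ℝ) * Real.log n + α * n ≤ t) :
    DTV (configP Q κ n) (gibbs Q κ n) t ≤ tvBound Q α := by
  obtain ⟨m, hm'⟩ : ∃ m, n + m = κ * Q := ⟨κ * Q - n, by omega⟩
  have hnm : n ≤ m := by omega
  refine Real.iSup_le (fun x => Real.iSup_le (fun A => ?_) (Real.sqrt_nonneg _))
    (Real.sqrt_nonneg _)
  refine Real.abs_le_sqrt ((event_bound hm' hn hnm x t A).trans
    ((sum_bound hn t rfl (by positivity)).trans ?_))
  gcongr
  exact remaining_le hn hnm hα rfl ht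

lemma tendsto_tvBound (Q : ℕ) : Tendsto (tvBound Q) atTop (nhds 0) := by
  have h1 : Tendsto (fun α : ℝ => Real.exp (1 - α)) atTop (nhds 0) :=
    Real.tendsto_exp_atBot.comp (tendsto_atBot_add_const_left _ 1 tendsto_neg_atTop_atBot)
  have h2 := (((Real.continuous_exp.tendsto _).comp
    (h1.const_mul (2 * (Real.exp 1 * Q)))).sub_const 1).sqrt
  simp only [mul_zero, Real.exp_zero, sub_self, Real.sqrt_zero] at h2
  exact h2

end Asymptotics

/-- upper bound for the congestion dynamics (Theorem 3.6):
`lim_{alpha→∞} limsup_{n→∞} D_TV(t_n + ⌈alpha n⌉) = 0`. -/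
theorem statement13 (Q : Nat) (hQ : 2 ≤ Q) (rho : Real) (hrho0 : 0 < rho) (hrho1 : rho ≤ 1/2) :
    Filter.Tendsto (fun al : Real =>
        Filter.limsup (fun kap : Nat =>
            DTV (configP Q kap (⌊rho * ((kap * Q : Nat) : Real)⌋₊))
              (gibbs Q kap (⌊rho * ((kap * Q : Nat) : Real)⌋₊))
              (⌈(1/2) * ((⌊rho * ((kap * Q : Nat) : Real)⌋₊ : Nat) : Real)
                  * Real.log ((⌊rho * ((kap * Q : Nat) : Real)⌋₊ : Nat) : Real)⌉₊
                + ⌈al * ((⌊rho * ((kap * Q : Nat) : Real)⌋₊ : Nat) : Real)⌉₊))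
          Filter.atTop)
      Filter.atTop (nhds 0) := by
  -- There is at least one player as soon as `rho * kap ≥ 1`.
  have hev : ∀ᶠ kap : ℕ in atTop, 0 < ⌊rho * ((kap * Q : ℕ) : ℝ)⌋₊ := by
    filter_upwards [eventually_ge_atTop ⌈rho⁻¹⌉₊] with kap hkap
    rw [Nat.floor_pos]
    have h1 : rho⁻¹ ≤ kap := Nat.ceil_le.1 hkap
    have h2 : (kap : ℝ) ≤ ((kap * Q : ℕ) : ℝ) := by
      exact_mod_cast Nat.le_mul_of_pos_right kap (by omega)
    calc (1 : ℝ) = rho * rho⁻¹ := (mul_inv_cancel₀ hrho0.ne').symm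
      _ ≤ _ := mul_le_mul_of_nonneg_left (h1.trans h2) hrho0.le
  have hhalf : ∀ kap : ℕ, 2 * ⌊rho * ((kap * Q : ℕ) : ℝ)⌋₊ ≤ kap * Q := by
    intro kap
    have h1 : ((⌊rho * ((kap * Q : ℕ) : ℝ)⌋₊ : ℕ) : ℝ) ≤ rho * ((kap * Q : ℕ) : ℝ) :=
      Nat.floor_le (by positivity)
    have h2 : rho * ((kap * Q : ℕ) : ℝ) ≤ 1 / 2 * ((kap * Q : ℕ) : ℝ) := by gcongr
    have h3 : ((2 * ⌊rho * ((kap * Q : ℕ) : ℝ)⌋₊ : ℕ) : ℝ) ≤ ((kap * Q : ℕ) : ℝ) := by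
      rw [Nat.cast_mul 2]
      norm_num only [Nat.cast_ofNat]
      linarith
    exact_mod_cast h3
  have hle : ∀ al : ℝ, 0 ≤ al → ∀ᶠ kap : ℕ in atTop,
      DTV (configP Q kap (⌊rho * ((kap * Q : Nat) : Real)⌋₊))
              (gibbs Q kap (⌊rho * ((kap * Q : Nat) : Real)⌋₊))
              (⌈(1/2) * ((⌊rho * ((kap * Q : Nat) : Real)⌋₊ : Nat) : Real)
                  * Real.log ((⌊rho * ((kap * Q : Nat) : Real)⌋₊ : Nat) : Real)⌉₊
                + ⌈al * ((⌊rho * ((kap * Q : Nat) : Real)⌋₊ : Nat) : Real)⌉₊) ≤ tvBound Q al := by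
    intro al hal
    filter_upwards [hev] with kap hkap
    refine DTV_le (hhalf kap) hkap hal ?_
    rw [Nat.cast_add]
    exact add_le_add (Nat.le_ceil _) (Nat.le_ceil _)
  refine tendsto_of_tendsto_of_tendsto_of_le_of_le' tendsto_const_nhds (tendsto_tvBound Q) ?_ ?_
  · filter_upwards [eventually_ge_atTop 0] with al hal
    exact le_limsup_of_frequently_le (Frequently.of_forall (fun kap => DTV_nonneg _ _ _))
      ⟨_, hle al hal⟩
  · filter_upwards [eventually_ge_atTop 0] with al hal
    exact limsup_le_of_le ⟨0, fun a ha => by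
      obtain ⟨kap, hkap⟩ := (Filter.eventually_map.1 ha).exists
      exact (DTV_nonneg _ _ _).trans hkap⟩ (hle al hal)

end CongestionPaper
end
end

section
/- Let Q ≥ 2 be a fixed integer and ρ ∈ (0, 1) a fixed real. For a positive integer κ let N = κQ and n = ⌊ρN⌋. For the congestion dynamics {σ(t)} on 𝒮_n, with t_n := ⌈(1/2) n log n⌉, one has lim_{α→∞} liminf_{n→∞} D_TV( t_n − ⌊αn⌋ ) = 1. -/
/-!
The congestion dynamics is a labelled exclusion process on `κQ` slots: a uniform player either
keeps its slot or jumps to a uniform vacant one.  All players feel the same attraction towards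
vacant slots, so for weights `a i` with `∑ a i = 0` this attraction cancels in the weighted count
`f(σ) = ∑ a i · 1{σ i = u}` of players on a resource `u`.  Hence `f` is an exact eigenfunction
(`labelStat_eigen`), with eigenvalue `λ = 1 - (N - n) / (n (N - n + 1)) ≥ 1 - 1/n`.

Wilson's method (`wilson_lower_bound`) then applies.  With `|a i| ≤ 1` one step changes `f` by at
most `1`, so both the variance of `f(σ(t))` and the second moment of `f` under the Gibbs measure
are at most `1 / (2 (1 - λ)) ≤ n`; the latter uses stationarity, which follows from
`detailed_balance`.  Starting from the round-robin assignment with `a` the centred indicator of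
the players starting on `u`, the initial value of `f` is at least `n / (4 Q²)`, so at time
`½ n log n - α n` its mean is at least of order `e^α √n` (`decay_lower`), whereas its standard
deviation stays `O(√n)`.  Chebyshev's inequality gives `D_TV ≥ 1 - 128 Q⁴ e^(-2(α-2))` for all
large `κ`, and the limit follows by letting `α → ∞`.
-/

open scoped BigOperators
open Filter MeasureTheory

noncomputable section

namespace CongestionPaper

attribute [local instance 10] Classical.propDecidable

/-! ### Wilson's method for a finite chain -/

section Wilson

lemma delta_nonneg {X : Type*} (x0 x : X) : 0 ≤ delta x0 x := by
  unfold delta; split_ifs <;> norm_num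

variable {X : Type*} [Fintype X]

lemma sum_evolve_succ (p : X → X → ℝ) (mu h : X → ℝ) (t : ℕ) :
    ∑ y, evolve p mu (t + 1) y * h y
      = ∑ x, evolve p mu t x * ∑ y, p x y * h y := by
  simp only [evolve, Finset.sum_mul, Finset.mul_sum]
  rw [Finset.sum_comm]
  simp only [mul_assoc]

lemma evolve_nonneg {p : X → X → ℝ} (hp0 : ∀ x y, 0 ≤ p x y) {mu : X → ℝ}
    (hmu : ∀ x, 0 ≤ mu x) (t : ℕ) (x : X) : 0 ≤ evolve p mu t x := by
  induction t generalizing x with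
  | zero => exact hmu x
  | succ t ih => exact Finset.sum_nonneg fun y _ => mul_nonneg (ih y) (hp0 y x)

lemma evolve_sum_one {p : X → X → ℝ} (hp1 : ∀ x, ∑ y, p x y = 1) {mu : X → ℝ}
    (hmu : ∑ x, mu x = 1) (t : ℕ) : ∑ x, evolve p mu t x = 1 := by
  induction t with
  | zero => exact hmu
  | succ t ih =>
    have h := sum_evolve_succ p mu (fun _ => 1) t
    simp only [mul_one, hp1] at h
    rw [h, ih]

lemma sum_delta_mul (x0 : X) (h : X → ℝ) : ∑ x, delta x0 x * h x = h x0 := by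
  simp [delta]

lemma sum_delta (x0 : X) : ∑ x, delta x0 x = 1 := by
  simp [delta]

lemma tvDist_le_one {mu nu : X → ℝ} (hmu : ∀ x, 0 ≤ mu x) (hnu : ∀ x, 0 ≤ nu x)
    (hmu1 : ∑ x, mu x = 1) (hnu1 : ∑ x, nu x = 1) : tvDist mu nu ≤ 1 := by
  unfold tvDist
  refine ciSup_le fun A => ?_
  have h1 : ∑ x ∈ A, mu x ≤ 1 := hmu1 ▸
    Finset.sum_le_sum_of_subset_of_nonneg (Finset.subset_univ A) fun x _ _ => hmu x
  have h2 : ∑ x ∈ A, nu x ≤ 1 := hnu1 ▸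
    Finset.sum_le_sum_of_subset_of_nonneg (Finset.subset_univ A) fun x _ _ => hnu x
  have h3 : 0 ≤ ∑ x ∈ A, mu x := Finset.sum_nonneg fun x _ => hmu x
  have h4 : 0 ≤ ∑ x ∈ A, nu x := Finset.sum_nonneg fun x _ => hnu x
  rw [Finset.sum_sub_distrib, abs_le]
  constructor <;> linarith

lemma le_tvDist (mu nu : X → ℝ) (A : Finset X) :
    ∑ x ∈ A, mu x - ∑ x ∈ A, nu x ≤ tvDist mu nu := by
  rw [← Finset.sum_sub_distrib]
  exact (le_abs_self _).trans
    (le_ciSup (f := fun A : Finset X => |∑ x ∈ A, (mu x - nu x)|)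
      (Set.finite_range _).bddAbove A)

lemma tvDist_le_DTV (p : X → X → ℝ) (pi : X → ℝ) (t : ℕ) (x0 : X) :
    tvDist (evolve p (delta x0) t) pi ≤ DTV p pi t :=
  le_ciSup (f := fun x0 : X => tvDist (evolve p (delta x0) t) pi)
    (Set.finite_range _).bddAbove x0

lemma DTV_le_one {p : X → X → ℝ} (hp0 : ∀ x y, 0 ≤ p x y) (hp1 : ∀ x, ∑ y, p x y = 1)
    {pi : X → ℝ} (hpi0 : ∀ x, 0 ≤ pi x) (hpi1 : ∑ x, pi x = 1) (t : ℕ) [Nonempty X] :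
    DTV p pi t ≤ 1 :=
  ciSup_le fun x0 => tvDist_le_one (evolve_nonneg hp0 (delta_nonneg x0) t) hpi0
    (evolve_sum_one hp1 (sum_delta x0) t) hpi1

/-- One-step bound on the second moment of an eigenfunction whose increments have
conditional second moment at most `R`. -/
lemma second_moment_step {p : X → X → ℝ} (hp1 : ∀ x, ∑ y, p x y = 1)
    {f : X → ℝ} {lam R : ℝ} (hf : ∀ x, ∑ y, p x y * f y = lam * f x)
    (hR : ∀ x, ∑ y, p x y * (f y - f x) ^ 2 ≤ R) (x : X) :
    ∑ y, p x y * f y ^ 2 ≤ (2 * lam - 1) * f x ^ 2 + R := by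
  have h : ∑ y, p x y * (f y - f x) ^ 2
      = ∑ y, p x y * f y ^ 2 - 2 * f x * ∑ y, p x y * f y + f x ^ 2 * ∑ y, p x y := by
    rw [Finset.mul_sum, Finset.mul_sum, ← Finset.sum_sub_distrib, ← Finset.sum_add_distrib]
    exact Finset.sum_congr rfl fun y _ => by ring
  have := hR x
  rw [h, hf, hp1] at this
  nlinarith

/-- **Wilson's lower bound.** If `f` is an eigenfunction with eigenvalue `lam` whose increments
have conditional second moment at most `R ≤ 2 (1 - lam) B`, then `f` has variance at most `B`
at time `t` and second moment at most `B` in equilibrium, while its mean at time `t` is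
`lam ^ t * f x0`.  The event
`f ≥ lam ^ t * f x0 / 2` therefore separates the two laws. -/
lemma wilson_lower_bound {p : X → X → ℝ} (hp0 : ∀ x y, 0 ≤ p x y)
    (hp1 : ∀ x, ∑ y, p x y = 1) {pi : X → ℝ} (hpi0 : ∀ x, 0 ≤ pi x)
    (hpi1 : ∑ x, pi x = 1) (hstat : ∀ y, ∑ x, pi x * p x y = pi y)
    {f : X → ℝ} {lam R B : ℝ} (hf : ∀ x, ∑ y, p x y * f y = lam * f x)
    (hR : ∀ x, ∑ y, p x y * (f y - f x) ^ 2 ≤ R)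
    (hlam0 : 1 / 2 ≤ lam) (hlam1 : lam < 1) (hB0 : 0 ≤ B) (hB : R ≤ 2 * (1 - lam) * B)
    (x0 : X) (hx0 : 0 < f x0) (t : ℕ) :
    1 - 8 * B / (lam ^ t * f x0) ^ 2 ≤ tvDist (evolve p (delta x0) t) pi := by
  have hstep := second_moment_step hp1 hf hR
  have hmean : ∀ s, ∑ x, evolve p (delta x0) s x * f x = lam ^ s * f x0 := by
    intro s
    induction s with
    | zero => simpa [evolve] using sum_delta_mul x0 f
    | succ s ih =>
      rw [sum_evolve_succ]
      simp only [hf]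
      rw [pow_succ, mul_right_comm, ← ih, Finset.sum_mul]
      exact Finset.sum_congr rfl fun x _ => by ring
  have hsec : ∀ s, ∑ x, evolve p (delta x0) s x * f x ^ 2 ≤ (lam ^ s * f x0) ^ 2 + B := by
    intro s
    induction s with
    | zero =>
      have := sum_delta_mul x0 (fun x => f x ^ 2)
      simp only [evolve, pow_zero, one_mul]
      linarith
    | succ s ih =>
      rw [sum_evolve_succ]
      have h1 : ∑ x, evolve p (delta x0) s x * ∑ y, p x y * f y ^ 2
          ≤ ∑ x, evolve p (delta x0) s x * ((2 * lam - 1) * f x ^ 2 + R) :=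
        Finset.sum_le_sum fun x _ => mul_le_mul_of_nonneg_left (hstep x)
          (evolve_nonneg hp0 (delta_nonneg x0) s x)
      have h2 : ∑ x, evolve p (delta x0) s x * ((2 * lam - 1) * f x ^ 2 + R)
          = (2 * lam - 1) * ∑ x, evolve p (delta x0) s x * f x ^ 2 + R := by
        have h3 : R = R * ∑ x, evolve p (delta x0) s x := by
          rw [evolve_sum_one hp1 (sum_delta x0) s, mul_one]
        conv_rhs => rw [h3]
        rw [Finset.mul_sum, Finset.mul_sum, ← Finset.sum_add_distrib]
        exact Finset.sum_congr rfl fun x _ => by ring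
      have h4 : (2 * lam - 1) * ∑ x, evolve p (delta x0) s x * f x ^ 2
          ≤ (2 * lam - 1) * ((lam ^ s * f x0) ^ 2 + B) :=
        mul_le_mul_of_nonneg_left ih (by linarith)
      have h5 : (lam ^ (s + 1) * f x0) ^ 2 = lam ^ 2 * (lam ^ s * f x0) ^ 2 := by ring
      rw [h5]
      nlinarith [mul_nonneg (sq_nonneg (lam - 1)) (sq_nonneg (lam ^ s * f x0))]
  have hpisec : ∑ x, pi x * f x ^ 2 ≤ B := by
    have h1 : ∑ y, pi y * f y ^ 2 = ∑ x, pi x * ∑ y, p x y * f y ^ 2 := by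
      simp only [Finset.mul_sum]
      rw [Finset.sum_comm]
      refine Finset.sum_congr rfl fun y _ => ?_
      conv_lhs => rw [← hstat y, Finset.sum_mul]
      exact Finset.sum_congr rfl fun x _ => mul_assoc _ _ _
    have h2 : ∑ x, pi x * ∑ y, p x y * f y ^ 2
        ≤ ∑ x, pi x * ((2 * lam - 1) * f x ^ 2 + R) :=
      Finset.sum_le_sum fun x _ => mul_le_mul_of_nonneg_left (hstep x) (hpi0 x)
    have h3 : ∑ x, pi x * ((2 * lam - 1) * f x ^ 2 + R)
        = (2 * lam - 1) * ∑ x, pi x * f x ^ 2 + R := by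
      have h4 : R = R * ∑ x, pi x := by rw [hpi1, mul_one]
      conv_rhs => rw [h4]
      rw [Finset.mul_sum, Finset.mul_sum, ← Finset.sum_add_distrib]
      exact Finset.sum_congr rfl fun x _ => by ring
    rw [h3, ← h1] at h2
    have : 2 * (1 - lam) * ∑ x, pi x * f x ^ 2 ≤ 2 * (1 - lam) * B := by linarith
    exact le_of_mul_le_mul_left this (by linarith)
  set E := lam ^ t * f x0 with hE
  have hEpos : 0 < E := mul_pos (pow_pos (by linarith) t) hx0
  have hmu0 := evolve_nonneg hp0 (delta_nonneg x0) t
  set mu := evolve p (delta x0) t with hmu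
  have hmu1 : ∑ x, mu x = 1 := evolve_sum_one hp1 (sum_delta x0) t
  set A : Finset X := Finset.univ.filter fun x => E / 2 ≤ f x with hA
  have hvar : ∑ x, mu x * (f x - E) ^ 2 ≤ B := by
    have h1 : ∑ x, mu x * (f x - E) ^ 2
        = ∑ x, mu x * f x ^ 2 - 2 * E * ∑ x, mu x * f x + E ^ 2 * ∑ x, mu x := by
      rw [Finset.mul_sum, Finset.mul_sum, ← Finset.sum_sub_distrib, ← Finset.sum_add_distrib]
      exact Finset.sum_congr rfl fun y _ => by ring
    rw [h1, hmean t, hmu1]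
    have := hsec t
    nlinarith
  -- Chebyshev at time `t`: the complement of `A` forces a deviation of at least `E / 2`.
  have hcheb1 : (1 - ∑ x ∈ A, mu x) * (E / 2) ^ 2 ≤ B := by
    have h1 : 1 - ∑ x ∈ A, mu x = ∑ x ∈ Aᶜ, mu x := by
      rw [← hmu1, ← Finset.sum_add_sum_compl A mu]; ring
    rw [h1, Finset.sum_mul]
    refine le_trans (le_trans (Finset.sum_le_sum (g := fun x => mu x * (f x - E) ^ 2) ?_)
      (Finset.sum_le_sum_of_subset_of_nonneg (Finset.subset_univ _) ?_)) hvar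
    · intro x hx
      have hx' : f x < E / 2 := by simpa [hA] using hx
      exact mul_le_mul_of_nonneg_left (by nlinarith) (hmu0 x)
    · intro x _ _
      exact mul_nonneg (hmu0 x) (sq_nonneg _)
  have hcheb2 : (∑ x ∈ A, pi x) * (E / 2) ^ 2 ≤ B := by
    rw [Finset.sum_mul]
    refine le_trans (le_trans (Finset.sum_le_sum (g := fun x => pi x * f x ^ 2) ?_)
      (Finset.sum_le_sum_of_subset_of_nonneg (Finset.subset_univ _) ?_)) hpisec
    · intro x hx
      have hx' : E / 2 ≤ f x := by simpa [hA] using hx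
      exact mul_le_mul_of_nonneg_left (by nlinarith) (hpi0 x)
    · intro x _ _
      exact mul_nonneg (hpi0 x) (sq_nonneg _)
  refine le_trans ?_ (le_tvDist mu pi A)
  have h8 : (1 - ∑ x ∈ A, mu x + ∑ x ∈ A, pi x) ≤ 8 * B / E ^ 2 := by
    rw [le_div_iff₀ (by positivity)]
    nlinarith
  linarith

end Wilson

/-! ### The congestion dynamics: one-step expectations -/

section Config

variable {Q kap n : ℕ}

lemma xiCount_eq_sum (sg : Fin n → Fin Q) (v : Fin Q) :
    (xiCount sg v : ℝ) = ∑ i, if sg i = v then (1 : ℝ) else 0 := by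
  simp [xiCount]

lemma sum_xiCount (sg : Fin n → Fin Q) : ∑ v, (xiCount sg v : ℝ) = n := by
  simp only [xiCount_eq_sum]
  rw [Finset.sum_comm]
  simp

lemma sum_vacancies (sg : Fin n → Fin Q) :
    ∑ v, ((kap : ℝ) - xiCount sg v) = kap * Q - n := by
  rw [Finset.sum_sub_distrib, sum_xiCount]
  simp [mul_comm]

lemma xiCount_change {sg sg' : Fin n → Fin Q} {i : Fin n}
    (h : ∀ j, j ≠ i → sg' j = sg j) (v : Fin Q) :
    xiCount sg v + (if sg' i = v then 1 else 0) = xiCount sg' v + (if sg i = v then 1 else 0) := by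
  have h1 : (xiCount sg v : ℝ) - xiCount sg' v
      = (if sg i = v then (1 : ℝ) else 0) - (if sg' i = v then (1 : ℝ) else 0) := by
    rw [xiCount_eq_sum, xiCount_eq_sum, ← Finset.sum_sub_distrib]
    refine Fintype.sum_eq_single i fun j hj => ?_
    rw [h j hj, sub_self]
  have h2 : ((xiCount sg v + (if sg' i = v then 1 else 0) : ℕ) : ℝ)
      = ((xiCount sg' v + (if sg i = v then 1 else 0) : ℕ) : ℝ) := by
    push_cast
    linarith
  exact_mod_cast h2

/-- Summing over the configurations reachable by moving player `i` amounts to summing over the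
new resource `v`; targets violating the capacity constraint carry the coefficient `0`. -/
lemma sum_moves (sg : ConfigState Q kap n) (phi : (Fin n → Fin Q) → ℝ) (i : Fin n) :
    (∑ sg' : ConfigState Q kap n,
      if sg'.1 i ≠ sg.1 i ∧ (∀ j, j ≠ i → sg'.1 j = sg.1 j)
        then ((kap - xiCount sg.1 (sg'.1 i) : ℕ) : ℝ) * phi sg'.1 else 0)
      = ∑ v, if v ≠ sg.1 i
        then ((kap : ℝ) - xiCount sg.1 v) * phi (Function.update sg.1 i v) else 0 := by
  have hupd : ∀ sg' : Fin n → Fin Q, (∀ j, j ≠ i → sg' j = sg.1 j) →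
      sg' = Function.update sg.1 i (sg' i) := by
    intro sg' h
    funext j
    by_cases hj : j = i
    · subst hj; simp
    · simp [hj, h j hj]
  refine Finset.sum_bij_ne_zero (fun sg' _ _ => sg'.1 i) (fun _ _ _ => Finset.mem_univ _)
    ?_ ?_ ?_
  · intro a _ ha b _ hb hab
    have ha' := (ite_ne_right_iff.1 ha).1.2
    have hb' := (ite_ne_right_iff.1 hb).1.2
    apply Subtype.ext
    rw [hupd a.1 ha', hupd b.1 hb']
    exact congrArg _ hab
  · intro v _ hv
    obtain ⟨hne, hnz⟩ := ite_ne_right_iff.1 hv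
    have hlt : xiCount sg.1 v < kap := by
      refine lt_of_le_of_ne (sg.2 v) fun h => hnz ?_
      rw [h]; simp
    have hoff : ∀ j, j ≠ i → Function.update sg.1 i v j = sg.1 j := fun j hj => by simp [hj]
    have hvalid : ∀ w, xiCount (Function.update sg.1 i v) w ≤ kap := by
      intro w
      have h := xiCount_change hoff w
      have hw := sg.2 w
      by_cases hwv : v = w
      · subst hwv
        simp only [Function.update_self, if_true] at h
        omega
      · simp only [Function.update_self, hwv, if_false] at h
        omega
    refine ⟨⟨Function.update sg.1 i v, hvalid⟩, Finset.mem_univ _, ?_, by simp⟩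
    rw [if_pos ⟨by simpa using hne, hoff⟩]
    simp only [Function.update_self]
    rwa [Nat.cast_sub (sg.2 v)]
  · intro a _ ha
    obtain ⟨h, _⟩ := ite_ne_right_iff.1 ha
    rw [if_pos h, if_pos h.1, ← hupd a.1 h.2, Nat.cast_sub (sg.2 _)]

/-- One-step expectation: a uniform player either keeps its slot or moves to a uniform vacant
slot, all `1 + κQ - n` options being equally likely. -/
lemma sum_configP_mul (sg : ConfigState Q kap n) (phi : (Fin n → Fin Q) → ℝ) :
    ∑ sg', configP Q kap n sg sg' * phi sg'.1
      = (∑ i, (phi sg.1 + ∑ v, ((kap : ℝ) - xiCount sg.1 v) * phi (Function.update sg.1 i v)))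
        / ((n : ℝ) * ((1 + kap * Q - n : ℕ) : ℝ)) := by
  have hterm : ∀ sg' : ConfigState Q kap n, configP Q kap n sg sg' * phi sg'.1
      = ((if sg' = sg then
            (∑ i, ((1 + kap - xiCount sg.1 (sg.1 i) : ℕ) : ℝ)) * phi sg.1 else 0)
        + ∑ i, if sg'.1 i ≠ sg.1 i ∧ (∀ j, j ≠ i → sg'.1 j = sg.1 j)
            then ((kap - xiCount sg.1 (sg'.1 i) : ℕ) : ℝ) * phi sg'.1 else 0)
        / ((n : ℝ) * ((1 + kap * Q - n : ℕ) : ℝ)) := by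
    intro sg'
    unfold configP
    by_cases h : sg' = sg
    · subst h
      simp [div_mul_eq_mul_div]
    · rw [if_neg h, if_neg h, zero_add, div_mul_eq_mul_div, Finset.sum_mul]
      simp only [ite_mul, zero_mul]
  simp only [hterm]
  rw [← Finset.sum_div, Finset.sum_add_distrib, Finset.sum_comm, Finset.sum_ite_eq' Finset.univ sg]
  simp only [Finset.mem_univ, if_true, sum_moves]
  rw [Finset.sum_mul, ← Finset.sum_add_distrib]
  congr 1
  refine Finset.sum_congr rfl fun i _ => ?_
  rw [Nat.cast_sub ((sg.2 (sg.1 i)).trans (Nat.le_add_left kap 1))]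
  rw [← Finset.add_sum_erase Finset.univ (fun v => ((kap : ℝ) - xiCount sg.1 v)
    * phi (Function.update sg.1 i v)) (Finset.mem_univ (sg.1 i))]
  rw [← Finset.add_sum_erase Finset.univ (fun v => if v ≠ sg.1 i then ((kap : ℝ)
    - xiCount sg.1 v) * phi (Function.update sg.1 i v) else 0) (Finset.mem_univ (sg.1 i))]
  have : ∑ v ∈ Finset.univ.erase (sg.1 i), (if v ≠ sg.1 i then ((kap : ℝ)
      - xiCount sg.1 v) * phi (Function.update sg.1 i v) else 0)
      = ∑ v ∈ Finset.univ.erase (sg.1 i),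
        ((kap : ℝ) - xiCount sg.1 v) * phi (Function.update sg.1 i v) :=
    Finset.sum_congr rfl fun v hv => if_pos (Finset.ne_of_mem_erase hv)
  rw [this]
  simp only [ne_eq, not_true_eq_false, if_false, Function.update_eq_self]
  push_cast
  ring

lemma configP_nonneg (sg sg' : ConfigState Q kap n) : 0 ≤ configP Q kap n sg sg' := by
  unfold configP
  split_ifs
  · positivity
  · refine div_nonneg (Finset.sum_nonneg fun i _ => ?_) (by positivity)
    split_ifs <;> positivity

lemma cast_options (h : n < kap * Q) : ((1 + kap * Q - n : ℕ) : ℝ) = 1 + kap * Q - n := by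
  rw [Nat.cast_sub (by omega)]
  push_cast
  ring

lemma sum_configP (hn : 0 < n) (h : n < kap * Q) (sg : ConfigState Q kap n) :
    ∑ sg', configP Q kap n sg sg' = 1 := by
  have h1 := sum_configP_mul sg (fun _ => 1)
  simp only [mul_one, sum_vacancies] at h1
  have hlt : (n : ℝ) < kap * Q := by exact_mod_cast h
  have hn' : (0 : ℝ) < n := by exact_mod_cast hn
  rw [h1, cast_options h]
  simp only [Finset.sum_const, Finset.card_univ, Fintype.card_fin, nsmul_eq_mul]
  rw [div_eq_one_iff_eq (by nlinarith)]
  ring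

/-! ### Reversibility of the Gibbs measure -/

lemma potF_sub {sg sg' : ConfigState Q kap n} {i : Fin n} (hi : sg'.1 i ≠ sg.1 i)
    (h : ∀ j, j ≠ i → sg'.1 j = sg.1 j) :
    potF Q kap n sg - potF Q kap n sg'
      = Real.log (kap - xiCount sg.1 (sg'.1 i)) - Real.log (kap - xiCount sg'.1 (sg.1 i)) := by
  have ha := xiCount_change h (sg.1 i)
  have hb := xiCount_change h (sg'.1 i)
  rw [if_neg hi, if_pos rfl] at ha
  rw [if_pos rfl, if_neg hi.symm] at hb
  unfold potF
  rw [← Finset.sum_sub_distrib, Fintype.sum_eq_add (sg.1 i) (sg'.1 i) hi.symm]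
  · have ha' : xiCount sg.1 (sg.1 i) = xiCount sg'.1 (sg.1 i) + 1 := by omega
    have hb' : xiCount sg'.1 (sg'.1 i) = xiCount sg.1 (sg'.1 i) + 1 := by omega
    rw [ha', hb', Finset.sum_range_succ _ (xiCount sg'.1 (sg.1 i) + 1),
      Finset.sum_range_succ _ (xiCount sg.1 (sg'.1 i) + 1)]
    push_cast
    simp only [add_sub_add_right_eq_sub]
    ring
  · rintro v ⟨hva, hvb⟩
    have hv := xiCount_change h v
    rw [if_neg hva.symm, if_neg hvb.symm] at hv
    simp only [add_zero] at hv
    rw [hv, sub_self]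

lemma weight_balance {sg sg' : ConfigState Q kap n} {i : Fin n} (hi : sg'.1 i ≠ sg.1 i)
    (h : ∀ j, j ≠ i → sg'.1 j = sg.1 j) :
    Real.exp (-potF Q kap n sg) * ((kap - xiCount sg.1 (sg'.1 i) : ℕ) : ℝ)
      = Real.exp (-potF Q kap n sg') * ((kap - xiCount sg'.1 (sg.1 i) : ℕ) : ℝ) := by
  have ha := xiCount_change h (sg.1 i)
  have hb := xiCount_change h (sg'.1 i)
  rw [if_neg hi, if_pos rfl] at ha
  rw [if_pos rfl, if_neg hi.symm] at hb
  have ha2 := sg.2 (sg.1 i)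
  have hb2 := sg'.2 (sg'.1 i)
  have hpos1 : (0 : ℝ) < ((kap - xiCount sg.1 (sg'.1 i) : ℕ) : ℝ) := by
    exact_mod_cast (by omega : 0 < kap - xiCount sg.1 (sg'.1 i))
  have hpos2 : (0 : ℝ) < ((kap - xiCount sg'.1 (sg.1 i) : ℕ) : ℝ) := by
    exact_mod_cast (by omega : 0 < kap - xiCount sg'.1 (sg.1 i))
  have hsub := potF_sub hi h
  rw [← Nat.cast_sub (sg.2 _), ← Nat.cast_sub (sg'.2 _)] at hsub
  conv_lhs => rw [← Real.exp_log hpos1, ← Real.exp_add]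
  conv_rhs => rw [← Real.exp_log hpos2, ← Real.exp_add]
  congr 1
  linarith

lemma detailed_balance (sg sg' : ConfigState Q kap n) :
    Real.exp (-potF Q kap n sg) * configP Q kap n sg sg'
      = Real.exp (-potF Q kap n sg') * configP Q kap n sg' sg := by
  by_cases hs : sg' = sg
  · rw [hs]
  unfold configP
  rw [if_neg hs, if_neg (Ne.symm hs), ← mul_div_assoc, ← mul_div_assoc, Finset.mul_sum,
    Finset.mul_sum]
  congr 1
  refine Finset.sum_congr rfl fun i _ => ?_
  by_cases hc : sg'.1 i ≠ sg.1 i ∧ ∀ j, j ≠ i → sg'.1 j = sg.1 j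
  · rw [if_pos hc, if_pos ⟨hc.1.symm, fun j hj => (hc.2 j hj).symm⟩]
    exact weight_balance hc.1 hc.2
  · rw [if_neg hc, if_neg fun hc' => hc ⟨hc'.1.symm, fun j hj => (hc'.2 j hj).symm⟩]
    simp

lemma gibbs_nonneg (sg : ConfigState Q kap n) : 0 ≤ gibbs Q kap n sg :=
  div_nonneg (Real.exp_pos _).le (Finset.sum_nonneg fun _ _ => (Real.exp_pos _).le)

lemma sum_gibbs [Nonempty (ConfigState Q kap n)] : ∑ sg, gibbs Q kap n sg = 1 := by
  unfold gibbs
  rw [← Finset.sum_div]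
  exact div_self (Finset.sum_pos (fun _ _ => Real.exp_pos _) Finset.univ_nonempty).ne'

lemma gibbs_stationary (hn : 0 < n) (h : n < kap * Q) (sg' : ConfigState Q kap n) :
    ∑ sg, gibbs Q kap n sg * configP Q kap n sg sg' = gibbs Q kap n sg' := by
  have h1 : ∀ sg, gibbs Q kap n sg * configP Q kap n sg sg'
      = gibbs Q kap n sg' * configP Q kap n sg' sg := by
    intro sg
    unfold gibbs
    rw [div_mul_eq_mul_div, div_mul_eq_mul_div, detailed_balance]
  simp only [h1]
  rw [← Finset.mul_sum, sum_configP hn h, mul_one]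

/-! ### The eigenfunction -/

/-- The weighted number of players on resource `u`, player `i` having weight `a i`. -/
def labelStat (a : Fin n → ℝ) (u : Fin Q) (sg : Fin n → Fin Q) : ℝ :=
  ∑ i, a i * if sg i = u then 1 else 0

lemma labelStat_update (a : Fin n → ℝ) (u : Fin Q) (sg : Fin n → Fin Q) (i : Fin n)
    (v : Fin Q) :
    labelStat a u (Function.update sg i v) = labelStat a u sg
      + a i * ((if v = u then 1 else 0) - (if sg i = u then 1 else 0)) := by
  unfold labelStat
  rw [← sub_eq_iff_eq_add', ← Finset.sum_sub_distrib]
  rw [Fintype.sum_eq_single i]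
  · rw [Function.update_self]; ring
  · intro j hj
    simp [hj]

/-- When the weights sum to zero, the attraction towards vacant slots, which is the same for all
players, cancels, and the weighted count is an exact eigenfunction. -/
lemma labelStat_eigen (hn : 0 < n) (h : n < kap * Q) (a : Fin n → ℝ) (ha : ∑ i, a i = 0)
    (u : Fin Q) (sg : ConfigState Q kap n) :
    ∑ sg', configP Q kap n sg sg' * labelStat a u sg'.1
      = (1 - ((kap : ℝ) * Q - n) / (n * (1 + kap * Q - n))) * labelStat a u sg.1 := by
  have hlt : (n : ℝ) < kap * Q := by exact_mod_cast h
  have hn' : (0 : ℝ) < n := by exact_mod_cast hn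
  rw [sum_configP_mul, cast_options h]
  have hsum : ∑ i, (labelStat a u sg.1 + ∑ v, ((kap : ℝ) - xiCount sg.1 v)
      * labelStat a u (Function.update sg.1 i v))
      = n * (1 + kap * Q - n) * labelStat a u sg.1
        - (kap * Q - n) * labelStat a u sg.1 := by
    have hi : ∀ i, labelStat a u sg.1 + ∑ v, ((kap : ℝ) - xiCount sg.1 v)
        * labelStat a u (Function.update sg.1 i v)
        = (1 + kap * Q - n) * labelStat a u sg.1
          + a i * (kap - xiCount sg.1 u)
          - (kap * Q - n) * (a i * if sg.1 i = u then 1 else 0) := by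
      intro i
      have h1 : ∀ v, ((kap : ℝ) - xiCount sg.1 v)
          * labelStat a u (Function.update sg.1 i v)
          = ((kap : ℝ) - xiCount sg.1 v)
            * (labelStat a u sg.1 - a i * if sg.1 i = u then 1 else 0)
            + (if v = u then a i * ((kap : ℝ) - xiCount sg.1 v) else 0) := by
        intro v
        rw [labelStat_update]
        split_ifs <;> ring
      simp only [h1]
      rw [Finset.sum_add_distrib, ← Finset.sum_mul, sum_vacancies]
      simp only [Finset.sum_ite_eq', Finset.mem_univ, if_true]
      ring
    simp only [hi]
    rw [Finset.sum_sub_distrib, Finset.sum_add_distrib, ← Finset.sum_mul Finset.univ a, ha,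
      ← Finset.mul_sum Finset.univ (fun i => a i * if sg.1 i = u then 1 else 0)]
    simp only [Finset.sum_const, Finset.card_univ, Fintype.card_fin, nsmul_eq_mul]
    unfold labelStat
    ring
  rw [hsum]
  have hd : (n : ℝ) * (1 + kap * Q - n) ≠ 0 := by
    have : (0 : ℝ) < 1 + kap * Q - n := by linarith
    positivity
  rw [sub_div, mul_div_cancel_left₀ _ hd]
  ring

lemma labelStat_increment (hn : 0 < n) (h : n < kap * Q) (a : Fin n → ℝ)
    (ha : ∀ i, |a i| ≤ 1) (u : Fin Q) (sg : ConfigState Q kap n) :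
    ∑ sg', configP Q kap n sg sg' * (labelStat a u sg'.1 - labelStat a u sg.1) ^ 2 ≤ 1 := by
  have hlt : (n : ℝ) < kap * Q := by exact_mod_cast h
  have hn' : (0 : ℝ) < n := by exact_mod_cast hn
  rw [sum_configP_mul sg (fun s => (labelStat a u s - labelStat a u sg.1) ^ 2), cast_options h]
  rw [div_le_one (by nlinarith)]
  calc _ ≤ ∑ i : Fin n, (1 + (kap : ℝ) * Q - n) := by
        refine Finset.sum_le_sum fun i _ => ?_
        have h1 : ∑ v, ((kap : ℝ) - xiCount sg.1 v)
            * (labelStat a u (Function.update sg.1 i v) - labelStat a u sg.1) ^ 2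
            ≤ ∑ v, ((kap : ℝ) - xiCount sg.1 v) := by
          refine Finset.sum_le_sum fun v _ => ?_
          have h2 : (0 : ℝ) ≤ kap - xiCount sg.1 v := by
            rw [sub_nonneg]; exact_mod_cast sg.2 v
          refine mul_le_of_le_one_right h2 ?_
          have h3 : a i ^ 2 ≤ 1 := (sq_le_one_iff_abs_le_one _).2 (ha i)
          rw [labelStat_update, add_sub_cancel_left]
          split_ifs <;> simp [h3]
        rw [sum_vacancies] at h1
        simp only [sub_self]
        linarith
    _ = _ := by
        simp only [Finset.sum_const, Finset.card_univ, Fintype.card_fin, nsmul_eq_mul]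

/-! ### The initial configuration -/

/-- Round-robin assignment: player `i` uses resource `i mod Q`. -/
def roundRobin (hQ : 0 < Q) (n : ℕ) (i : Fin n) : Fin Q := ⟨i.1 % Q, Nat.mod_lt _ hQ⟩

lemma roundRobin_le (hQ : 0 < Q) (h : n ≤ kap * Q) (v : Fin Q) :
    xiCount (roundRobin hQ n) v ≤ kap := by
  unfold xiCount
  rw [← Finset.card_range kap]
  refine Finset.card_le_card_of_injOn (fun i => i.1 / Q) ?_ ?_
  · intro i _
    simp only [Finset.coe_range, Set.mem_Iio]
    rw [Nat.div_lt_iff_lt_mul hQ]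
    exact lt_of_lt_of_le i.2 h
  · intro i hi j hj hij
    simp only [Finset.coe_filter, Finset.mem_univ, true_and, Set.mem_ofPred_eq, roundRobin,
      Fin.ext_iff] at hi hj
    apply Fin.ext
    simp only at hij
    rw [← Nat.div_add_mod i.1 Q, ← Nat.div_add_mod j.1 Q, hij, hi, hj]

lemma le_roundRobin (hQ : 0 < Q) (v : Fin Q) : n / Q ≤ xiCount (roundRobin hQ n) v := by
  unfold xiCount
  have hlt : ∀ k < n / Q, Q * k + v.1 < n := by
    intro k hk
    have h1 : Q * (k + 1) ≤ Q * (n / Q) := Nat.mul_le_mul_left Q hk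
    have h2 := Nat.mul_div_le n Q
    have h3 := v.2
    rw [Nat.mul_add] at h1
    omega
  rw [← Fintype.card_fin (n / Q), ← Finset.card_univ]
  refine Finset.card_le_card_of_injOn (fun k => ⟨Q * k.1 + v.1, hlt k.1 k.2⟩) ?_ ?_
  · intro k _
    simp only [Finset.coe_filter, Finset.mem_univ, true_and, Set.mem_ofPred_eq, roundRobin,
      Fin.ext_iff]
    rw [Nat.mul_add_mod, Nat.mod_eq_of_lt v.2]
  · intro k _ l _ hkl
    simp only [Fin.mk.injEq, Nat.add_right_cancel_iff] at hkl
    exact Fin.ext (Nat.eq_of_mul_eq_mul_left hQ hkl)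

/-- Finite-size lower bound, from Wilson's method started at the round-robin assignment with
centred weights recording which players start on the first resource: the eigenvalue is at least
`1 - 1/n`, and the initial value of the eigenfunction is at least `n / (4 Q²)`. -/
lemma DTV_lower (hQ : 2 ≤ Q) (hnQ : Q ≤ n) (h : n < kap * Q) (t : ℕ) :
    Nonempty (ConfigState Q kap n) ∧
    1 - 8 * n / ((1 - 1 / (n : ℝ)) ^ t * (n / (4 * Q ^ 2))) ^ 2
      ≤ DTV (configP Q kap n) (gibbs Q kap n) t := by
  have hQ0 : 0 < Q := by omega
  have hn : 0 < n := by omega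
  have hlt : (n : ℝ) + 1 ≤ kap * Q := by exact_mod_cast h
  have hn2 : (2 : ℝ) ≤ n := by exact_mod_cast hQ.trans hnQ
  have hn' : (0 : ℝ) < n := by linarith
  have hQ' : (0 : ℝ) < Q := by exact_mod_cast hQ0
  let x0 : ConfigState Q kap n := ⟨roundRobin hQ0 n, roundRobin_le hQ0 h.le⟩
  have : Nonempty (ConfigState Q kap n) := ⟨x0⟩
  refine ⟨this, ?_⟩
  let u : Fin Q := ⟨0, hQ0⟩
  let u1 : Fin Q := ⟨1, by omega⟩
  set c : ℝ := (xiCount x0.1 u : ℝ) with hc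
  have hcn : c + xiCount x0.1 u1 ≤ n := by
    rw [← sum_xiCount x0.1]
    have hne : u ≠ u1 := by simp [u, u1]
    rw [hc, ← Finset.sum_pair (f := fun v => (xiCount x0.1 v : ℝ)) hne]
    exact Finset.sum_le_sum_of_subset_of_nonneg (Finset.subset_univ _) fun _ _ _ => by positivity
  have hfloor : (n : ℝ) / (2 * Q) ≤ ((n / Q : ℕ) : ℝ) := by
    have h1 : n ≤ 2 * Q * (n / Q) := by
      have h2 := Nat.div_add_mod n Q
      have h3 := Nat.mod_lt n hQ0
      have h4 : 1 ≤ n / Q := (Nat.one_le_div_iff hQ0).2 hnQ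
      have h5 : Q * 1 ≤ Q * (n / Q) := Nat.mul_le_mul_left Q h4
      have h6 : 2 * Q * (n / Q) = 2 * (Q * (n / Q)) := by ring
      omega
    rw [div_le_iff₀ (by positivity), mul_comm]
    exact_mod_cast h1
  have hc0 : (n : ℝ) / (2 * Q) ≤ c :=
    hfloor.trans (by rw [hc]; exact_mod_cast le_roundRobin hQ0 u)
  have hc1 : (n : ℝ) / (2 * Q) ≤ xiCount x0.1 u1 :=
    hfloor.trans (by exact_mod_cast le_roundRobin hQ0 u1)
  have hd : (0 : ℝ) < n / (2 * Q) := by positivity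
  let a : Fin n → ℝ := fun i => (if x0.1 i = u then 1 else 0) - c / n
  have hcn1 : c / n ≤ 1 := by rw [div_le_one hn']; linarith
  have hcn0 : 0 ≤ c / n := div_nonneg (by linarith) hn'.le
  have ha0 : ∑ i, a i = 0 := by
    simp only [a]
    rw [Finset.sum_sub_distrib, ← xiCount_eq_sum]
    simp only [Finset.sum_const, Finset.card_univ, Fintype.card_fin, nsmul_eq_mul]
    rw [mul_div_cancel₀ _ hn'.ne', sub_self]
  have ha1 : ∀ i, |a i| ≤ 1 := by
    intro i
    simp only [a]
    rw [abs_le]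
    split_ifs <;> constructor <;> linarith
  have hf0 : (n : ℝ) / (4 * Q ^ 2) ≤ labelStat a u x0.1 := by
    have h1 : labelStat a u x0.1 = c * (n - c) / n := by
      have h2 : ∀ i, (a i * if x0.1 i = u then (1 : ℝ) else 0)
          = (1 - c / n) * if x0.1 i = u then (1 : ℝ) else 0 := by
        intro i
        simp only [a]
        split_ifs <;> ring
      unfold labelStat
      simp only [h2]
      rw [← Finset.mul_sum, ← xiCount_eq_sum, ← hc]
      field_simp
    rw [h1, le_div_iff₀ hn']
    calc (n : ℝ) / (4 * Q ^ 2) * n = n / (2 * Q) * (n / (2 * Q)) := by field_simp; ring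
      _ ≤ c * (n - c) := mul_le_mul hc0 (by linarith) hd.le (by linarith)
  set lam : ℝ := 1 - ((kap : ℝ) * Q - n) / (n * (1 + kap * Q - n)) with hlam
  have hM : (0 : ℝ) < 1 + kap * Q - n := by linarith
  have hgap_le : ((kap : ℝ) * Q - n) / (n * (1 + kap * Q - n)) ≤ 1 / n := by
    rw [div_le_div_iff₀ (by positivity) hn']
    nlinarith
  have hgap_ge : 1 / (2 * (n : ℝ)) ≤ ((kap : ℝ) * Q - n) / (n * (1 + kap * Q - n)) := by
    rw [div_le_div_iff₀ (by positivity) (by positivity)]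
    nlinarith
  have hn_half : 1 / (n : ℝ) ≤ 1 / 2 := one_div_le_one_div_of_le (by norm_num) hn2
  have hpos2 : 0 < 1 / (2 * (n : ℝ)) := by positivity
  have hB : (1 : ℝ) ≤ 2 * (1 - lam) * n := by
    have h1 : 2 * (1 / (2 * (n : ℝ))) * n = 1 := by field_simp
    nlinarith
  have hd4 : (0 : ℝ) < n / (4 * Q ^ 2) := by positivity
  have key := wilson_lower_bound (configP_nonneg (Q := Q) (kap := kap) (n := n))
    (sum_configP hn h) gibbs_nonneg sum_gibbs (gibbs_stationary hn h)
    (f := fun s => labelStat a u s.1) (R := 1) (B := n)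
    (labelStat_eigen hn h a ha0 u) (labelStat_increment hn h a ha1 u)
    (by linarith) (by linarith) hn'.le hB x0 (lt_of_lt_of_le hd4 hf0) t
  refine le_trans ?_ (key.trans (tvDist_le_DTV _ _ t x0))
  have hbase : 0 < 1 - 1 / (n : ℝ) := by linarith
  have hpow : (1 - 1 / (n : ℝ)) ^ t ≤ lam ^ t := pow_le_pow_left₀ hbase.le (by linarith) t
  have hmul : (1 - 1 / (n : ℝ)) ^ t * (n / (4 * Q ^ 2)) ≤ lam ^ t * labelStat a u x0.1 :=
    mul_le_mul hpow hf0 hd4.le ((pow_pos hbase t).le.trans hpow)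
  gcongr

end Config

/-! ### Asymptotics -/

/-- At time `½ n log n - α n` the factor `(1 - 1/n) ^ t` is still at least `e^(α-2) / √n`. -/
lemma decay_lower {n : ℕ} (hn : 2 ≤ n) {al : ℝ}
    (hbig : al ≤ (1 / 2) * Real.log n) :
    Real.exp (al - 2) / Real.sqrt n
      ≤ (1 - 1 / (n : ℝ)) ^ (⌈(1 / 2) * (n : ℝ) * Real.log n⌉₊ - ⌊al * (n : ℝ)⌋₊) := by
  have hn2 : (2 : ℝ) ≤ n := by exact_mod_cast hn
  have hn' : (0 : ℝ) < n := by linarith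
  have hn1 : (0 : ℝ) < n - 1 := by linarith
  have hlog : Real.log n ≤ n - 1 := Real.log_le_sub_one_of_pos hn'
  have hlog0 : 0 ≤ Real.log n := Real.log_nonneg (by linarith)
  set L := Real.log n with hL
  set t := ⌈(1 / 2) * (n : ℝ) * L⌉₊ - ⌊al * (n : ℝ)⌋₊ with ht
  have hle : ⌊al * (n : ℝ)⌋₊ ≤ ⌈(1 / 2) * (n : ℝ) * L⌉₊ := by
    refine le_trans (Nat.floor_le_floor ?_) (Nat.floor_le_ceil _)
    nlinarith
  have htub : (t : ℝ) ≤ (1 / 2) * n * L + 2 - al * n := by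
    rw [ht, Nat.cast_sub hle]
    have h1 := Nat.ceil_lt_add_one (a := (1 / 2) * (n : ℝ) * L) (by positivity)
    have h2 := Nat.lt_floor_add_one (al * (n : ℝ))
    linarith
  have htub2 : (t : ℝ) ≤ n * (n - 1) := by
    have h1 := Nat.ceil_lt_add_one (a := (1 / 2) * (n : ℝ) * L) (by positivity)
    have h2 : (t : ℝ) ≤ (⌈(1 / 2) * (n : ℝ) * L⌉₊ : ℝ) := by exact_mod_cast Nat.sub_le _ _
    nlinarith
  have hquot : (t : ℝ) / (n - 1) ≤ L / 2 - al + 2 := by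
    have h1 : (t : ℝ) / (n - 1) = t / n + t / (n * (n - 1)) := by field_simp; ring
    have h2 : (t : ℝ) / (n * (n - 1)) ≤ 1 := (div_le_one (by positivity)).2 htub2
    have h3 : (t : ℝ) / n ≤ L / 2 - al + 1 := by
      rw [div_le_iff₀ hn']
      nlinarith
    linarith
  have hbase : Real.exp (-(1 / ((n : ℝ) - 1))) ≤ 1 - 1 / n := by
    have h1 : 1 + 1 / ((n : ℝ) - 1) ≤ Real.exp (1 / ((n : ℝ) - 1)) := by
      have := Real.add_one_le_exp (1 / ((n : ℝ) - 1)); linarith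
    have h2 : 1 - 1 / (n : ℝ) = (1 + 1 / ((n : ℝ) - 1))⁻¹ := by field_simp; ring
    rw [Real.exp_neg, h2]
    exact inv_anti₀ (by positivity) h1
  have hsqrt : Real.sqrt n = Real.exp (L / 2) := by
    rw [Real.exp_half, hL, Real.exp_log hn']
  calc Real.exp (al - 2) / Real.sqrt n = Real.exp (al - 2 - L / 2) := by
        rw [hsqrt, ← Real.exp_sub]
    _ ≤ Real.exp (-(t / ((n : ℝ) - 1))) := Real.exp_le_exp.2 (by linarith)
    _ = Real.exp (-(1 / ((n : ℝ) - 1))) ^ t := by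
        rw [← Real.exp_nat_mul]; congr 1; ring
    _ ≤ _ := pow_le_pow_left₀ (Real.exp_pos _).le hbase t

lemma DTV_lower_asymp {Q kap n : ℕ} (hQ : 2 ≤ Q) (hnQ : Q ≤ n) (h : n < kap * Q) {al : ℝ}
    (hbig : al ≤ (1 / 2) * Real.log n) :
    1 - 128 * (Q : ℝ) ^ 4 * Real.exp (-2 * (al - 2))
      ≤ DTV (configP Q kap n) (gibbs Q kap n)
          (⌈(1 / 2) * (n : ℝ) * Real.log n⌉₊ - ⌊al * (n : ℝ)⌋₊) := by
  have hn : (0 : ℝ) < n := by exact_mod_cast (by omega : 0 < n)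
  have hQ' : (0 : ℝ) < Q := by exact_mod_cast (by omega : 0 < Q)
  refine le_trans ?_ (DTV_lower hQ hnQ h _).2
  have h1 := decay_lower (hQ.trans hnQ) hbig
  have h2 : 128 * (Q : ℝ) ^ 4 * Real.exp (-2 * (al - 2))
      = 8 * n / (Real.exp (al - 2) / Real.sqrt n * (n / (4 * Q ^ 2))) ^ 2 := by
    have h3 : Real.exp (-2 * (al - 2)) = (Real.exp (al - 2) ^ 2)⁻¹ := by
      rw [← Real.exp_nat_mul, ← Real.exp_neg]; congr 1; push_cast; ring
    have h4 : (Real.exp (al - 2) / Real.sqrt n * (n / (4 * Q ^ 2))) ^ 2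
        = Real.exp (al - 2) ^ 2 / n * (n / (4 * Q ^ 2)) ^ 2 := by
      rw [mul_pow, div_pow, Real.sq_sqrt hn.le]
    rw [h3, h4]
    have := Real.exp_pos (al - 2)
    field_simp
    ring
  rw [h2]
  have hs : 0 < Real.sqrt n := Real.sqrt_pos.2 hn
  have he := Real.exp_pos (al - 2)
  gcongr

/-- lower bound for the congestion dynamics (Theorem 3.7):
`lim_{alpha→∞} liminf_{n→∞} D_TV(t_n - ⌊alpha n⌋) = 1`. -/
theorem statement14 (Q : Nat) (hQ : 2 ≤ Q) (rho : Real) (hrho0 : 0 < rho) (hrho1 : rho < 1) :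
    Filter.Tendsto (fun al : Real =>
        Filter.liminf (fun kap : Nat =>
            DTV (configP Q kap (⌊rho * ((kap * Q : Nat) : Real)⌋₊))
              (gibbs Q kap (⌊rho * ((kap * Q : Nat) : Real)⌋₊))
              (⌈(1/2) * ((⌊rho * ((kap * Q : Nat) : Real)⌋₊ : Nat) : Real)
                  * Real.log ((⌊rho * ((kap * Q : Nat) : Real)⌋₊ : Nat) : Real)⌉₊
                - ⌊al * ((⌊rho * ((kap * Q : Nat) : Real)⌋₊ : Nat) : Real)⌋₊))
          Filter.atTop)
      Filter.atTop (nhds 1) := by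
  have hNtop : Tendsto (fun kap : ℕ => kap * Q) atTop atTop :=
    tendsto_id.atTop_mul_const' (by omega)
  have hntop : Tendsto (fun kap : ℕ => ⌊rho * ((kap * Q : ℕ) : ℝ)⌋₊) atTop atTop :=
    tendsto_nat_floor_atTop.comp
      ((tendsto_natCast_atTop_atTop.comp hNtop).const_mul_atTop hrho0)
  have hlt : ∀ᶠ kap : ℕ in atTop, ⌊rho * ((kap * Q : ℕ) : ℝ)⌋₊ < kap * Q := by
    filter_upwards [eventually_gt_atTop 0] with kap hkap
    have hpos : (0 : ℝ) < ((kap * Q : ℕ) : ℝ) := by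
      exact_mod_cast Nat.mul_pos hkap (by omega : 0 < Q)
    rw [Nat.floor_lt (by positivity)]
    nlinarith
  have hup : ∀ al : ℝ, ∀ᶠ kap : ℕ in atTop,
      DTV (configP Q kap (⌊rho * ((kap * Q : ℕ) : ℝ)⌋₊))
        (gibbs Q kap (⌊rho * ((kap * Q : ℕ) : ℝ)⌋₊))
        (⌈(1/2) * ((⌊rho * ((kap * Q : ℕ) : ℝ)⌋₊ : ℕ) : ℝ)
            * Real.log ((⌊rho * ((kap * Q : ℕ) : ℝ)⌋₊ : ℕ) : ℝ)⌉₊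
          - ⌊al * ((⌊rho * ((kap * Q : ℕ) : ℝ)⌋₊ : ℕ) : ℝ)⌋₊) ≤ 1 := by
    intro al
    filter_upwards [hlt, hntop.eventually_ge_atTop Q] with kap h1 h2
    have := (DTV_lower hQ h2 h1 0).1
    exact DTV_le_one configP_nonneg (sum_configP (by omega) h1) gibbs_nonneg sum_gibbs _
  have hlow : ∀ al : ℝ, ∀ᶠ kap : ℕ in atTop,
      1 - 128 * (Q : ℝ) ^ 4 * Real.exp (-2 * (al - 2)) ≤
      DTV (configP Q kap (⌊rho * ((kap * Q : ℕ) : ℝ)⌋₊))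
        (gibbs Q kap (⌊rho * ((kap * Q : ℕ) : ℝ)⌋₊))
        (⌈(1/2) * ((⌊rho * ((kap * Q : ℕ) : ℝ)⌋₊ : ℕ) : ℝ)
            * Real.log ((⌊rho * ((kap * Q : ℕ) : ℝ)⌋₊ : ℕ) : ℝ)⌉₊
          - ⌊al * ((⌊rho * ((kap * Q : ℕ) : ℝ)⌋₊ : ℕ) : ℝ)⌋₊) := by
    intro al
    have hlogtop : Tendsto (fun kap : ℕ =>
        (1 / 2) * Real.log ((⌊rho * ((kap * Q : ℕ) : ℝ)⌋₊ : ℕ) : ℝ)) atTop atTop :=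
      (Real.tendsto_log_atTop.comp (tendsto_natCast_atTop_atTop.comp hntop)).const_mul_atTop
        (by norm_num)
    filter_upwards [hlt, hntop.eventually_ge_atTop Q, hlogtop.eventually_ge_atTop al]
      with kap h1 h2 h3
    exact DTV_lower_asymp hQ h2 h1 h3
  have hlim : Tendsto (fun al : ℝ => 1 - 128 * (Q : ℝ) ^ 4 * Real.exp (-2 * (al - 2)))
      atTop (nhds 1) := by
    have h1 : Tendsto (fun al : ℝ => -2 * (al - 2)) atTop atBot :=
      (tendsto_atTop_add_const_right _ (-2 : ℝ) tendsto_id).const_mul_atTop_of_neg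
        (by norm_num)
    have h2 := ((Real.tendsto_exp_atBot.comp h1).const_mul (128 * (Q : ℝ) ^ 4)).const_sub 1
    simpa using h2
  refine tendsto_of_tendsto_of_tendsto_of_le_of_le' hlim tendsto_const_nhds ?_ ?_
  · exact Eventually.of_forall fun al =>
      le_liminf_of_le (isCoboundedUnder_ge_of_eventually_le atTop (hup al)) (hlow al)
  · exact Eventually.of_forall fun al => liminf_le_of_le ⟨_, hlow al⟩ fun b hb =>
      let ⟨_, h1, h2⟩ := (hb.and (hup al)).exists
      h1.trans h2

end CongestionPaper
end
end
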